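/- arXiv:2510.15807 — 2 statements merged into one kernel-verified Lean document; each statement's English description precedes it below -/
import Mathlib

section
/- For every integer n ≥ 0 and all real x, y one has Σ_{k=0}^{n} q_{n−k,k}·x^{n−k}·y^{k} = Σ_{i=0}^{n} P(N_n = i)·x^{i}·(x+y)^{n−i}; in particular, if x+y ≠ 0 this equals (x+y)^n·G_n(x/(x+y)). -/
open MeasureTheory

noncomputable section

/-- The triangle with vertices (0,0), (1,0), (0,1). -/
def T : Set (ℝ × ℝ) := convexHull ℝ {(0, 0), (1, 0), (0, 1)}

/-- The uniform distribution on `T`: twice Lebesgue measure restricted to `T`. -/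
def μT : Measure (ℝ × ℝ) := (2 : ENNReal) • (volume.restrict T)

/-- Joint law of `n` independent uniform points in `T`. -/
def P (n : ℕ) : Measure (Fin n → ℝ × ℝ) := Measure.pi fun _ => μT

/-- The random convex chain: convex hull of the points together with `(1,0)` and `(0,1)`. -/
def Tchain (n : ℕ) (ω : Fin n → ℝ × ℝ) : Set (ℝ × ℝ) :=
  convexHull ℝ (Set.range ω ∪ {(1, 0), (0, 1)})

/-- Normalized area `V_n = 2 vol(T_n)`. -/
def V (n : ℕ) (ω : Fin n → ℝ × ℝ) : ℝ := 2 * (volume (Tchain n ω)).toReal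

/-- Number of vertices of `T_n` other than the two corners. -/
def N (n : ℕ) (ω : Fin n → ℝ × ℝ) : ℕ :=
  (Set.extremePoints ℝ (Tchain n ω)).ncard - 2

/-- Normalized moments `q_{n,k} = C(n+k,k) E[V_n^k]`. -/
def q (n k : ℕ) : ℝ := ((n + k).choose k : ℝ) * ∫ ω, (V n ω) ^ k ∂ P n

/-- Probability generating function of `N_n`. -/
def G (n : ℕ) (t : ℝ) : ℝ := ∫ ω, t ^ (N n ω) ∂ P n

/-- Harmonic number. -/
def H (j : ℕ) : ℝ := ∑ i ∈ Finset.range j, 1 / ((i : ℝ) + 1)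

/-- Generalized harmonic number of order 2. -/
def H2 (j : ℕ) : ℝ := ∑ i ∈ Finset.range j, 1 / ((i : ℝ) + 1) ^ 2

/-- `c(k,ℓ)`: elementary symmetric polynomial `e_k` of `2/(j(j+1))`, `j = 1,…,ℓ`. -/
def c (k l : ℕ) : ℝ :=
  ∑ S ∈ (Finset.Icc 1 l).powersetCard k, ∏ j ∈ S, 2 / ((j : ℝ) * ((j : ℝ) + 1))

/-!
By the Krein–Milman theorem, the points with index in a set `S` all lie in the hull of the other
points and the corners if and only if none of them is a vertex. Expanding `(x + y) ^ (n - N)`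
by the binomial theorem over the subsets `S` of the `n - N` points that are not vertices therefore
gives, almost surely,
`x ^ N * (x + y) ^ (n - N) = ∑ S, 1_{S is enclosed by the rest} * x ^ (n - #S) * y ^ #S`.
By Fubini, a set of `k` points is enclosed by the other `n - k` with probability
`E[V_{n-k} ^ k]`, and there are `n.choose k` such sets, so taking expectations yields the identity.
The triangle matters only in that its two corners are vertices of the chain, so that `N` counts the
remaining vertices.
-/

section ExtremePoints

variable {E : Type*} [AddCommGroup E] [Module ℝ E] [TopologicalSpace E] [T2Space E]
  [IsTopologicalAddGroup E] [ContinuousSMul ℝ E] [LocallyConvexSpace ℝ E] {s t u : Set E} {x : E}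

theorem convexHull_eq_of_extremePoints_subset (hs : s.Finite) (hts : t ⊆ s)
    (h : (convexHull ℝ s).extremePoints ℝ ⊆ t) : convexHull ℝ t = convexHull ℝ s := by
  refine (convexHull_mono hts).antisymm ?_
  rw [← closure_convexHull_extremePoints (hs.isCompact_convexHull ℝ) (convex_convexHull ℝ s)]
  exact closure_minimal (convexHull_mono h) ((hs.subset hts).isClosed_convexHull ℝ)

theorem subset_convexHull_sdiff_iff_disjoint_extremePoints (hs : s.Finite) (hu : u ⊆ s) :
    u ⊆ convexHull ℝ (s \ u) ↔ Disjoint u ((convexHull ℝ s).extremePoints ℝ) := by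
  constructor
  · intro h
    have hull_eq : convexHull ℝ s = convexHull ℝ (s \ u) := by
      refine (convexHull_min ?_ (convex_convexHull ℝ _)).antisymm (convexHull_mono Set.sdiff_subset)
      rw [← Set.sdiff_union_of_subset hu]
      exact Set.union_subset (by simpa using subset_convexHull ℝ (s \ u)) (by simpa using h)
    rw [hull_eq]
    exact Set.disjoint_sdiff_right.mono_right extremePoints_convexHull_subset
  · intro h
    rw [convexHull_eq_of_extremePoints_subset hs Set.sdiff_subset
      (Set.subset_sdiff.2 ⟨extremePoints_convexHull_subset, h.symm⟩)]
    exact hu.trans (subset_convexHull ℝ s)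

theorem mem_extremePoints_convexHull_of_forall_lt (hs : s.Finite) (hx : x ∈ s) (f : E →ₗ[ℝ] ℝ)
    (hf : ∀ y ∈ s \ {x}, f y < f x) : x ∈ (convexHull ℝ s).extremePoints ℝ := by
  by_contra hext
  have hmem : x ∈ convexHull ℝ (s \ {x}) := by
    rw [← Set.singleton_subset_iff,
      subset_convexHull_sdiff_iff_disjoint_extremePoints hs (by simpa)]
    simpa using hext
  exact lt_irrefl (f x) (convexHull_min hf (convex_halfSpace_lt f.isLinear (f x)) hmem)

end ExtremePoints

section ClosedHull

variable {E : Type*} [AddCommGroup E] [Module ℝ E]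

theorem linearCombination_image_stdSimplex {ι : Type*} [Fintype ι] (v : ι → E) :
    Fintype.linearCombination ℝ v '' stdSimplex ℝ ι = convexHull ℝ (Set.range v) := by
  classical
  rw [← convexHull_rangle_single_eq_stdSimplex, LinearMap.image_convexHull, ← Set.range_comp]
  congr 2
  ext i
  simp

theorem isClosed_setOf_mem_convexHull_range [TopologicalSpace E] [T2Space E]
    [IsTopologicalAddGroup E] [ContinuousSMul ℝ E] {ι X : Type*} [Finite ι] [TopologicalSpace X]
    {v : X → ι → E} (hv : Continuous v) :
    IsClosed {p : E × X | p.1 ∈ convexHull ℝ (Set.range (v p.2))} := by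
  have := Fintype.ofFinite ι
  have : CompactSpace (stdSimplex ℝ ι) := isCompact_iff_compactSpace.mp (isCompact_stdSimplex ℝ ι)
  have hclosed : IsClosed {z : stdSimplex ℝ ι × (E × X) |
      ∑ i, z.1.1 i • v z.2.2 i = z.2.1} :=
    isClosed_eq (continuous_finsetSum _ fun i _ =>
      ((continuous_apply i).comp (continuous_subtype_val.comp continuous_fst)).smul (by fun_prop))
      (by fun_prop)
  convert isClosedMap_snd_of_compactSpace _ hclosed
  ext p
  simp [← linearCombination_image_stdSimplex, Fintype.linearCombination_apply]

end ClosedHull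

section IndependentPoints

variable {α ι : Type*} [MeasurableSpace α] [Fintype ι] (μ : Measure α) [SigmaFinite μ]

theorem pi_setOf_forall_mem (p : ι → Prop) [DecidablePred p] (K : ({i // ¬p i} → α) → Set α)
    (hK : MeasurableSet {z : α × ({i // ¬p i} → α) | z.1 ∈ K z.2}) :
    Measure.pi (fun _ : ι => μ) {ω | ∀ i, p i → ω i ∈ K fun j => ω j} =
      ∫⁻ a, μ (K a) ^ Fintype.card {i // p i} ∂Measure.pi fun _ => μ := by
  have hsplit := measurePreserving_piEquivPiSubtypeProd (fun _ : ι => μ) p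
  have hmeas : MeasurableSet {z : ({i // p i} → α) × ({i // ¬p i} → α) | ∀ i, z.1 i ∈ K z.2} := by
    rw [Set.ofPred_forall]
    exact MeasurableSet.iInter fun i => hK.preimage
      (f := fun z : ({i // p i} → α) × ({i // ¬p i} → α) => (z.1 i, z.2)) (by fun_prop)
  calc
    _ = ((Measure.pi fun _ : {i // p i} => μ).prod (Measure.pi fun _ => μ))
          {z | ∀ i, z.1 i ∈ K z.2} := by
      rw [← hsplit.measure_preimage hmeas.nullMeasurableSet]
      congr 1
      ext ω
      simp [MeasurableEquiv.piEquivPiSubtypeProd, Equiv.piEquivPiSubtypeProd]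
    _ = ∫⁻ a, Measure.pi (fun _ : {i // p i} => μ) (Set.univ.pi fun _ => K a)
          ∂Measure.pi fun _ => μ := by
      rw [Measure.prod_apply_symm hmeas]
      congr! with a
      ext
      simp
    _ = ∫⁻ a, μ (K a) ^ Fintype.card {i // p i} ∂Measure.pi fun _ => μ := by simp [Measure.pi_pi]

theorem ae_injective_pi [MeasurableEq α] [NullSingletonClass μ] :
    ∀ᵐ ω ∂Measure.pi (fun _ : ι => μ), Function.Injective ω := by
  classical
  have hne (i j : ι) (hij : i ≠ j) : ∀ᵐ ω ∂Measure.pi (fun _ : ι => μ), ω i ≠ ω j := by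
    have h := pi_setOf_forall_mem μ (· = i) (fun a => {a ⟨j, hij.symm⟩})
      (measurableSet_eq_fun (by fun_prop) (by fun_prop))
    simpa [ae_iff] using h
  have hall : ∀ᵐ ω ∂Measure.pi (fun _ : ι => μ), ∀ i j, i ≠ j → ω i ≠ ω j := by
    simpa only [ae_all_iff] using hne
  filter_upwards [hall] with ω hω i j hij
  exact not_imp_not.1 (hω i j) hij

theorem ae_forall_pi {p : α → Prop} (hp : ∀ᵐ a ∂μ, p a) :
    ∀ᵐ ω ∂Measure.pi (fun _ : ι => μ), ∀ i, p (ω i) :=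
  ae_all_iff.2 fun i => (Measure.quasiMeasurePreserving_eval (fun _ : ι => μ) i).ae hp

theorem ae_injective_and_forall_notMem_pi [MeasurableEq α] [NullSingletonClass μ] {F : Set α}
    (hF : F.Countable) :
    ∀ᵐ ω ∂Measure.pi (fun _ : ι => μ), Function.Injective ω ∧ ∀ i, ω i ∉ F :=
  (ae_injective_pi μ).and (ae_forall_pi μ (measure_eq_zero_iff_ae_notMem.1 (hF.measure_zero μ)))

end IndependentPoints

theorem integral_comp_eq_sum_range {Ω : Type*} [MeasurableSpace Ω] {μ : Measure Ω}
    [IsFiniteMeasure μ] {f : Ω → ℕ} (hf : AEMeasurable f μ) {n : ℕ} (hn : ∀ ω, f ω ≤ n)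
    (g : ℕ → ℝ) :
    ∫ ω, g (f ω) ∂μ = ∑ i ∈ Finset.range (n + 1), μ.real {ω | f ω = i} * g i := by
  have hrange : ∀ᵐ i ∂μ.map f, i ∈ (Finset.range (n + 1) : Set ℕ) :=
    (ae_map_iff hf (Set.to_countable _).measurableSet).2 <| by
      simp [Nat.lt_succ_of_le (hn _)]
  calc
    _ = ∫ i, g i ∂μ.map f := (integral_map hf (by fun_prop)).symm
    _ = ∫ i in (Finset.range (n + 1) : Set ℕ), g i ∂μ.map f := by
      rw [Measure.restrict_eq_self_of_ae_mem hrange]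
    _ = ∑ i ∈ Finset.range (n + 1), (μ.map f).real {i} * g i := by
      rw [setIntegral_finset _ (.of_finite (Finset.finite_toSet _))]
      rfl
    _ = _ := by
      simp only [map_measureReal_apply_of_aemeasurable hf (measurableSet_singleton _)]
      rfl

section Hull

variable {E : Type*} [AddCommGroup E] [Module ℝ E] {ι κ : Type*} {F : Set E}

/-- The convex hull of a family of points `ω` together with a fixed set `F` of corners. -/
def hullWith (F : Set E) (ω : ι → E) : Set E := convexHull ℝ (Set.range ω ∪ F)

/-- The number of vertices of `hullWith F ω` that are not corners. -/
def vertexCount (F : Set E) (ω : ι → E) : ℕ := ((hullWith F ω).extremePoints ℝ \ F).ncard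

/-- The event that every point with index in `S` lies in the hull of the points with index outside
`S` and the corners `F`. -/
def enclosed (F : Set E) (S : Finset ι) : Set (ι → E) :=
  {ω | ∀ i ∈ S, ω i ∈ hullWith F fun j : {j // j ∉ S} => ω j}

theorem hullWith_comp_equiv (e : κ ≃ ι) (ω : ι → E) : hullWith F (ω ∘ e) = hullWith F ω := by
  rw [hullWith, e.surjective.range_comp, hullWith]

theorem hullWith_subset {K : Set E} (hK : Convex ℝ K) (hF : F ⊆ K) {ω : ι → E}
    (hω : ∀ i, ω i ∈ K) : hullWith F ω ⊆ K :=
  convexHull_min (Set.union_subset (Set.range_subset_iff.2 hω) hF) hK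

theorem extremePoints_hullWith_sdiff (ω : ι → E) (hF : ∀ i, ω i ∉ F) :
    (hullWith F ω).extremePoints ℝ \ F = ω '' {i | ω i ∈ (hullWith F ω).extremePoints ℝ} := by
  ext p
  constructor
  · rintro ⟨hp, hpF⟩
    obtain ⟨i, rfl⟩ := (extremePoints_convexHull_subset hp).resolve_right hpF
    exact ⟨i, hp, rfl⟩
  · rintro ⟨i, hi, rfl⟩
    exact ⟨hi, hF i⟩

theorem vertexCount_le_card [Fintype ι] (ω : ι → E) : vertexCount F ω ≤ Fintype.card ι := by
  have hsub : (hullWith F ω).extremePoints ℝ \ F ⊆ Set.range ω :=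
    fun p hp => (extremePoints_convexHull_subset hp.1).resolve_right hp.2
  calc
    vertexCount F ω ≤ (Set.range ω).ncard := Set.ncard_le_ncard hsub (Set.finite_range ω)
    _ ≤ Fintype.card ι := by
      rw [← Set.image_univ, ← Nat.card_eq_fintype_card, ← Set.ncard_univ]
      exact Set.ncard_image_le

theorem vertexCount_eq_card_filter [Fintype ι] {ω : ι → E} (hω : Function.Injective ω)
    (hF : ∀ i, ω i ∉ F) [DecidablePred fun i => ω i ∈ (hullWith F ω).extremePoints ℝ] :
    vertexCount F ω = (Finset.univ.filter fun i => ω i ∈ (hullWith F ω).extremePoints ℝ).card := by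
  rw [vertexCount, extremePoints_hullWith_sdiff ω hF, Set.ncard_image_of_injective _ hω,
    ← Set.ncard_coe_finset, Finset.coe_filter_univ]

variable [TopologicalSpace E] [T2Space E] [IsTopologicalAddGroup E] [ContinuousSMul ℝ E]

theorem isClosed_setOf_mem_hullWith [Finite ι] (hF : F.Finite) :
    IsClosed {p : E × (ι → E) | p.1 ∈ hullWith F p.2} := by
  have := hF.to_subtype
  have hcont : Continuous fun ω : ι → E => Sum.elim ω ((↑) : F → E) :=
    continuous_pi <| Sum.rec (fun i => continuous_apply i) fun _ => continuous_const
  simpa [hullWith, Set.Sum.elim_range] using isClosed_setOf_mem_convexHull_range hcont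

variable [LocallyConvexSpace ℝ E]

theorem mem_enclosed_iff [Finite ι] (hF : F.Finite) {ω : ι → E} (hω : Function.Injective ω)
    (hωF : ∀ i, ω i ∉ F) (S : Finset ι) :
    ω ∈ enclosed F S ↔ ∀ i ∈ S, ω i ∉ (hullWith F ω).extremePoints ℝ := by
  have hrest : (Set.range ω ∪ F) \ (ω '' S) = Set.range (fun j : {j // j ∉ S} => ω j) ∪ F := by
    have hdisj : Disjoint F (ω '' S) := by
      rw [Set.disjoint_right]
      rintro _ ⟨i, -, rfl⟩
      exact hωF i
    rw [Set.union_sdiff_distrib, hdisj.sdiff_eq_left, Set.range_sdiff_image hω]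
    congr 1
    ext p
    simp
  have h := subset_convexHull_sdiff_iff_disjoint_extremePoints
    ((Set.finite_range ω).union hF) (u := ω '' S) (by grind)
  rw [hrest, Set.image_subset_iff, Set.disjoint_image_left] at h
  simpa [enclosed, hullWith, Set.subset_def, Set.disjoint_left] using h

theorem pow_vertexCount_mul_add_pow [Fintype ι] (hF : F.Finite) {ω : ι → E}
    (hω : Function.Injective ω) (hωF : ∀ i, ω i ∉ F) (x y : ℝ) :
    x ^ vertexCount F ω * (x + y) ^ (Fintype.card ι - vertexCount F ω) =
      ∑ S : Finset ι, (enclosed F S).indicator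
        (fun _ => x ^ (Fintype.card ι - S.card) * y ^ S.card) ω := by
  classical
  let I : Finset ι := {i | ω i ∉ (hullWith F ω).extremePoints ℝ}
  have hcard : vertexCount F ω + I.card = Fintype.card ι := by
    rw [vertexCount_eq_card_filter hω hωF]
    exact Finset.card_filter_add_card_filter_not _
  have hmem (S : Finset ι) : ω ∈ enclosed F S ↔ S ∈ I.powerset := by
    simp [mem_enclosed_iff hF hω hωF, Finset.subset_iff, I]
  calc
    _ = ∑ S ∈ I.powerset, x ^ vertexCount F ω * (y ^ S.card * x ^ (I.card - S.card)) := by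
      rw [← hcard, Nat.add_sub_cancel_left, add_comm x y, ← Finset.sum_pow_mul_eq_add_pow,
        Finset.mul_sum]
    _ = ∑ S ∈ I.powerset, x ^ (Fintype.card ι - S.card) * y ^ S.card := by
      refine Finset.sum_congr rfl fun S hS => ?_
      have hSI := Finset.card_le_card (Finset.mem_powerset.1 hS)
      rw [← hcard, Nat.add_sub_assoc hSI, pow_add]
      ring
    _ = _ := by
      simp only [Set.indicator_apply, hmem, Finset.sum_ite_mem, Finset.univ_inter]

end Hull

section RandomHull

variable {E : Type*} [AddCommGroup E] [Module ℝ E] [TopologicalSpace E] [T2Space E]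
  [IsTopologicalAddGroup E] [ContinuousSMul ℝ E] [SecondCountableTopology E]
  [MeasurableSpace E] {ι : Type*} {F : Set E}

/-- The normalized `k`-th moment of the `μ`-measure of the hull of `m` independent `μ`-distributed
points and the corners `F`; it is `q m k` when `μ` is uniform on the triangle `T`. -/
def hullMoment (μ : Measure E) (F : Set E) (m k : ℕ) : ℝ :=
  ((m + k).choose k : ℝ) * ∫ ω, μ.real (hullWith F ω) ^ k ∂Measure.pi fun _ : Fin m => μ

variable [OpensMeasurableSpace E] (μ : Measure E) [IsFiniteMeasure μ]

theorem measurableSet_enclosed [Finite ι] (hF : F.Finite) (S : Finset ι) :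
    MeasurableSet (enclosed F S) := by
  have hinter : enclosed F S = ⋂ i ∈ S, (fun ω : ι → E => (ω i, fun j : {j // j ∉ S} => ω j)) ⁻¹'
      {p | p.1 ∈ hullWith F p.2} := by
    ext ω
    simp [enclosed]
  rw [hinter]
  exact Finset.measurableSet_biInter _ fun i _ =>
    ((isClosed_setOf_mem_hullWith hF).preimage (by fun_prop)).measurableSet

theorem measurable_measure_hullWith [Finite ι] (hF : F.Finite) :
    Measurable fun ω : ι → E => μ (hullWith F ω) :=
  measurable_measure_prodMk_right (isClosed_setOf_mem_hullWith hF).measurableSet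

variable [Fintype ι]

theorem measureReal_enclosed (hF : F.Finite) (S : Finset ι) :
    (Measure.pi fun _ : ι => μ).real (enclosed F S) =
      ∫ ω, μ.real (hullWith F ω) ^ S.card
        ∂Measure.pi fun _ : Fin (Fintype.card ι - S.card) => μ := by
  classical
  have hcard : Fintype.card (Fin (Fintype.card ι - S.card)) = Fintype.card {i // i ∉ S} := by
    simp [Fintype.card_subtype_compl]
  have hreindex := measurePreserving_arrowCongr' (fun _ => μ) (fun _ => μ)
    (Fintype.equivOfCardEq hcard) (MeasurableEquiv.refl E) fun _ => MeasurePreserving.id μ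
  have hmeasure : (Measure.pi fun _ : ι => μ) (enclosed F S) =
      ∫⁻ ω, μ (hullWith F ω) ^ S.card ∂Measure.pi fun _ : Fin (Fintype.card ι - S.card) => μ := by
    rw [enclosed, pi_setOf_forall_mem μ (· ∈ S) (hullWith F)
      (isClosed_setOf_mem_hullWith hF).measurableSet,
      ← hreindex.lintegral_comp_emb (MeasurableEquiv.measurableEmbedding _)]
    refine lintegral_congr fun ω => ?_
    rw [Fintype.card_coe]
    exact congrArg (μ · ^ S.card) (hullWith_comp_equiv _ ω)
  rw [Measure.real, hmeasure, ← integral_toReal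
    ((measurable_measure_hullWith μ hF).pow_const _).aemeasurable
    (.of_forall fun _ => ENNReal.pow_lt_top (measure_lt_top _ _))]
  simp only [ENNReal.toReal_pow, Measure.real]

variable [LocallyConvexSpace ℝ E] [NullSingletonClass μ]

theorem aemeasurable_vertexCount (hF : F.Finite) :
    AEMeasurable (vertexCount F) (Measure.pi fun _ : ι => μ) := by
  classical
  refine ⟨fun ω => ∑ i, (enclosed F {i})ᶜ.indicator 1 ω, Finset.measurable_fun_sum _ fun i _ =>
    measurable_one.indicator (measurableSet_enclosed hF {i}).compl, ?_⟩
  filter_upwards [ae_injective_and_forall_notMem_pi μ hF.countable] with ω ⟨hω, hωF⟩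
  simp [vertexCount_eq_card_filter hω hωF, Set.indicator_apply, mem_enclosed_iff hF hω hωF]

theorem integral_pow_vertexCount_mul_add_pow (hF : F.Finite) (x y : ℝ) :
    ∫ ω, x ^ vertexCount F ω * (x + y) ^ (Fintype.card ι - vertexCount F ω)
        ∂Measure.pi (fun _ : ι => μ) =
      ∑ k ∈ Finset.range (Fintype.card ι + 1),
        hullMoment μ F (Fintype.card ι - k) k * x ^ (Fintype.card ι - k) * y ^ k := by
  let n := Fintype.card ι
  let moment (k : ℕ) : ℝ := ∫ ω, μ.real (hullWith F ω) ^ k ∂Measure.pi fun _ : Fin (n - k) => μ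
  calc
    _ = ∫ ω, ∑ S : Finset ι, (enclosed F S).indicator
          (fun _ => x ^ (n - S.card) * y ^ S.card) ω ∂Measure.pi (fun _ : ι => μ) := by
      refine integral_congr_ae ?_
      filter_upwards [ae_injective_and_forall_notMem_pi μ hF.countable] with ω ⟨hω, hωF⟩
      exact pow_vertexCount_mul_add_pow hF hω hωF x y
    _ = ∑ S : Finset ι, moment S.card * (x ^ (n - S.card) * y ^ S.card) := by
      rw [integral_finsetSum _ fun S _ =>
        (integrable_const _).indicator (measurableSet_enclosed hF S)]
      simp only [integral_indicator_const _ (measurableSet_enclosed hF _),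
        measureReal_enclosed μ hF, smul_eq_mul, n, moment]
    _ = ∑ k ∈ Finset.range (n + 1), n.choose k • (moment k * (x ^ (n - k) * y ^ k)) := by
      rw [← Finset.powerset_univ,
        Finset.sum_powerset_apply_card fun k => moment k * (x ^ (n - k) * y ^ k)]
      rfl
    _ = _ := by
      refine Finset.sum_congr rfl fun k hk => ?_
      rw [hullMoment, Nat.sub_add_cancel (Finset.mem_range_succ_iff.1 hk), nsmul_eq_mul]
      ring

theorem stmt1_general (hF : F.Finite) (n : ℕ) (x y : ℝ) :
    (∑ k ∈ Finset.range (n + 1), hullMoment μ F (n - k) k * x ^ (n - k) * y ^ k =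
      ∑ i ∈ Finset.range (n + 1), (Measure.pi fun _ : Fin n => μ).real {ω | vertexCount F ω = i} *
        x ^ i * (x + y) ^ (n - i)) ∧
    (x + y ≠ 0 →
      ∑ k ∈ Finset.range (n + 1), hullMoment μ F (n - k) k * x ^ (n - k) * y ^ k =
        (x + y) ^ n *
          ∫ ω, (x / (x + y)) ^ vertexCount F ω ∂Measure.pi fun _ : Fin n => μ) := by
  have hle (ω : Fin n → E) : vertexCount F ω ≤ n := by simpa using vertexCount_le_card ω
  have hmoments := integral_pow_vertexCount_mul_add_pow (ι := Fin n) μ hF x y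
  rw [Fintype.card_fin] at hmoments
  rw [← hmoments]
  constructor
  · rw [integral_comp_eq_sum_range (aemeasurable_vertexCount μ hF) hle
      fun i => x ^ i * (x + y) ^ (n - i)]
    simp only [mul_assoc]
  · intro hxy
    rw [← integral_const_mul]
    refine integral_congr_ae (.of_forall fun ω => ?_)
    beta_reduce
    rw [div_pow, pow_sub₀ _ hxy (hle ω)]
    ring

end RandomHull

section Triangle

theorem corners_subset_extremePoints_T : {(1, 0), (0, 1)} ⊆ T.extremePoints ℝ := by
  have hfin : ({(0, 0), (1, 0), (0, 1)} : Set (ℝ × ℝ)).Finite := Set.toFinite _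
  rintro p (rfl | rfl)
  · exact mem_extremePoints_convexHull_of_forall_lt hfin (by simp) (LinearMap.fst ℝ ℝ ℝ) (by simp)
  · exact mem_extremePoints_convexHull_of_forall_lt hfin (by simp) (LinearMap.snd ℝ ℝ ℝ) (by simp)

theorem isCompact_T : IsCompact T := (Set.toFinite _).isCompact_convexHull ℝ

instance isFiniteMeasure_μT : IsFiniteMeasure μT := by
  have : IsFiniteMeasure (volume.restrict T) := ⟨by simpa using isCompact_T.measure_lt_top⟩
  exact Measure.smul_finite _ (by simp)

instance nullSingletonClass_μT : NullSingletonClass μT := ⟨fun p => by simp [μT]⟩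

theorem ae_forall_mem_T (n : ℕ) : ∀ᵐ ω ∂P n, ∀ i, ω i ∈ T :=
  ae_forall_pi μT (Measure.ae_smul_measure (ae_restrict_mem isCompact_T.measurableSet) _)

theorem Tchain_subset_T {n : ℕ} {ω : Fin n → ℝ × ℝ} (hω : ∀ i, ω i ∈ T) : Tchain n ω ⊆ T :=
  hullWith_subset (convex_convexHull ℝ _)
    (corners_subset_extremePoints_T.trans extremePoints_subset) hω

theorem V_eq_measureReal_μT {n : ℕ} {ω : Fin n → ℝ × ℝ} (hω : ∀ i, ω i ∈ T) :
    V n ω = μT.real (hullWith {(1, 0), (0, 1)} ω) := by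
  change _ = μT.real (Tchain n ω)
  simp [V, μT, Measure.real, Measure.restrict_eq_self _ (Tchain_subset_T hω)]

theorem N_eq_vertexCount {n : ℕ} {ω : Fin n → ℝ × ℝ} (hω : ∀ i, ω i ∈ T) :
    N n ω = vertexCount {(1, 0), (0, 1)} ω := by
  have hcorners : {(1, 0), (0, 1)} ⊆ (Tchain n ω).extremePoints ℝ := fun p hp =>
    inter_extremePoints_subset_extremePoints_of_subset (Tchain_subset_T hω)
      ⟨subset_convexHull ℝ _ (Or.inr hp), corners_subset_extremePoints_T hp⟩
  rw [N, vertexCount, hullWith, ← Tchain, Set.ncard_sdiff hcorners, Set.ncard_pair (by simp)]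

theorem q_eq_hullMoment (m k : ℕ) : q m k = hullMoment μT {(1, 0), (0, 1)} m k := by
  rw [q, hullMoment]
  congr 1
  refine integral_congr_ae ?_
  filter_upwards [ae_forall_mem_T m] with ω hω
  rw [V_eq_measureReal_μT hω]

theorem measure_N_eq_toReal (n i : ℕ) : (P n {ω | N n ω = i}).toReal =
    (Measure.pi fun _ : Fin n => μT).real {ω | vertexCount {(1, 0), (0, 1)} ω = i} := by
  refine congrArg ENNReal.toReal (measure_congr ?_)
  filter_upwards [ae_forall_mem_T n] with ω hω
  exact congrArg (· = i) (N_eq_vertexCount hω)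

theorem G_eq_integral_pow_vertexCount (n : ℕ) (t : ℝ) :
    G n t = ∫ ω, t ^ vertexCount {(1, 0), (0, 1)} ω ∂Measure.pi fun _ : Fin n => μT := by
  refine integral_congr_ae ?_
  filter_upwards [ae_forall_mem_T n] with ω hω
  rw [N_eq_vertexCount hω]

end Triangle

/-- `Σ_{k=0}^n q_{n-k,k} x^{n-k} y^k = Σ_{i=0}^n P(N_n = i) x^i (x+y)^{n-i}`,
and if `x + y ≠ 0` this equals `(x+y)^n G_n(x/(x+y))`. -/
theorem stmt1 (n : ℕ) (x y : ℝ) :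
    (∑ k ∈ Finset.range (n + 1), q (n - k) k * x ^ (n - k) * y ^ k
      = ∑ i ∈ Finset.range (n + 1),
          (P n {ω | N n ω = i}).toReal * x ^ i * (x + y) ^ (n - i)) ∧
    (x + y ≠ 0 →
      ∑ k ∈ Finset.range (n + 1), q (n - k) k * x ^ (n - k) * y ^ k
        = (x + y) ^ n * G n (x / (x + y))) := by
  simpa only [q_eq_hullMoment, measure_N_eq_toReal, G_eq_integral_pow_vertexCount] using
    stmt1_general μT (Set.toFinite {(1, 0), (0, 1)}) n x y

end
end

section
/- For all integers n ≥ 1 and k ≥ 2 the normalized moments satisfy the recurrence q_{n,k} = ((n+k+1)(n+k+2)/2)·q_{n+1,k} − (n+k)(n+k+1)·(q_{n,k} + q_{n+1,k−1}) + ((n+k−1)(n+k)/2)·(q_{n−1,k} + 2·q_{n,k−1} + q_{n+1,k−2}). -/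
open MeasureTheory

noncomputable section

/-!
Order the points of `T` by the angle at which they are seen from the corner `(1, 0)`, and single out
the lowest of `n + 1` sample points. For a uniform point `z`, the height `h` at which the line
through `(1, 0)` and `z` meets the vertical axis is independent of the abscissa `s` of `z`; their
laws are Beta(1, 1) and Beta(1, 2). The `n` other points lie above that line, in the triangle with
corners `(1, 0)`, `(0, 1)`, `(0, h)`. Mapping this triangle affinely onto `T` divides areas by
`1 - h` and moves the lowest point to `(s, 0)`. Sample points to the right of the segment from
`(s, 0)` to `(0, 1)` do not change the hull, and the part of `T` to its left is a copy of `T`,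
contracted horizontally by the factor `s`.

Integrating over `h` and `s` shows that `(n + k) (n + k + 1) / 2 * q n k` is, up to a shift of `n`
by one, the convolution of `q` with `(a + b + 1) * (a + b).choose b`. The latter are the
coefficients of `(1 - x - y)⁻²`, so multiplying by `(1 - x - y)²` leaves the recurrence.
-/

section GeneratingFunctions

open Finset PowerSeries

variable {R : Type*} [CommRing R]

/-- The power series `∑ f n k x ^ n y ^ k`, encoded as a power series in `x` whose coefficients are
power series in `y`; thus `x` is `X` and `y` is `C X`. -/
def doubleSeries (f : ℕ → ℕ → R) : R⟦X⟧⟦X⟧ := .mk fun n ↦ .mk (f n)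

lemma coeff_coeff_doubleSeries (f : ℕ → ℕ → R) (n k : ℕ) :
    coeff k (coeff n (doubleSeries f)) = f n k := by
  simp [doubleSeries]

lemma coeff_coeff_doubleSeries_mul (f g : ℕ → ℕ → R) (n k : ℕ) :
    coeff k (coeff n (doubleSeries f * doubleSeries g)) =
      ∑ p ∈ antidiagonal n, ∑ r ∈ antidiagonal k, f p.1 r.1 * g p.2 r.2 := by
  simp [coeff_mul, coeff_coeff_doubleSeries]

lemma cast_choose_succ_add_succ (a b : ℕ) :
    ((a + 1 + (b + 1)).choose (b + 1) : R) =
      (a + 1 + b).choose b + (a + (b + 1)).choose (b + 1) := by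
  rw [← Nat.cast_add, show a + (b + 1) = a + 1 + b by ring, ← Nat.choose_succ_succ, ← add_assoc]

lemma one_sub_X_sub_C_X_mul_doubleSeries_choose :
    (1 - X - C X) * doubleSeries (fun a b ↦ ((a + b).choose b : R)) = 1 := by
  ext a b
  rcases a with _ | a <;> rcases b with _ | b <;>
    simp [sub_mul, coeff_coeff_doubleSeries, coeff_succ_X_mul, coeff_one,
      cast_choose_succ_add_succ, coeff_zero_X_mul, -coeff_zero_eq_constantCoeff]

lemma one_sub_X_sub_C_X_mul_doubleSeries_add_one_mul_choose :
    (1 - X - C X) * doubleSeries (fun a b ↦ ((a + b + 1) * (a + b).choose b : R)) =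
      doubleSeries fun a b ↦ ((a + b).choose b : R) := by
  ext a b
  rcases a with _ | a <;> rcases b with _ | b
  case succ.succ =>
    simp only [sub_mul, one_mul, map_sub, coeff_C_mul, coeff_succ_X_mul, coeff_coeff_doubleSeries,
      cast_choose_succ_add_succ]
    push_cast
    ring
  all_goals
    simp [sub_mul, coeff_coeff_doubleSeries, coeff_succ_X_mul, coeff_zero_X_mul,
      -coeff_zero_eq_constantCoeff]

lemma one_sub_X_sub_C_X_sq_mul_doubleSeries :
    (1 - X - C X) ^ 2 * doubleSeries (fun a b ↦ ((a + b + 1) * (a + b).choose b : R)) = 1 := by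
  rw [sq, mul_assoc, one_sub_X_sub_C_X_mul_doubleSeries_add_one_mul_choose,
    one_sub_X_sub_C_X_mul_doubleSeries_choose]

lemma doubleSeries_eq_X_mul {u v : ℕ → ℕ → R} (h0 : ∀ k, v 0 k = 0)
    (h : ∀ n k, v (n + 1) k = u n k) : doubleSeries v = X * doubleSeries u := by
  ext n k
  cases n <;>
    simp [coeff_coeff_doubleSeries, coeff_succ_X_mul, coeff_zero_X_mul, h0, h,
      -coeff_zero_eq_constantCoeff]

lemma recurrence_of_convolution {u v : ℕ → ℕ → R} (h0 : ∀ k, v 0 k = 0)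
    (h : ∀ n k, v (n + 1) k = ∑ p ∈ antidiagonal n, ∑ r ∈ antidiagonal k,
      u p.1 r.1 * ((p.2 + r.2 + 1) * (p.2 + r.2).choose r.2)) (n k : ℕ) :
    v (n + 2) (k + 2) - 2 * (v (n + 1) (k + 2) + v (n + 2) (k + 1)) +
      (v n (k + 2) + 2 * v (n + 1) (k + 1) + v (n + 2) k) = u (n + 1) (k + 2) := by
  set K : R⟦X⟧⟦X⟧ := doubleSeries fun a b ↦ (a + b + 1) * (a + b).choose b with hK
  have hv : doubleSeries v = X * (doubleSeries u * K) := by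
    rw [doubleSeries_eq_X_mul h0 fun n k ↦ rfl]
    congr 1
    ext n k
    rw [hK, coeff_coeff_doubleSeries, coeff_coeff_doubleSeries_mul, h]
  have key : (1 - X - C X) ^ 2 * doubleSeries v = X * doubleSeries u := by
    rw [hv, mul_left_comm, mul_left_comm _ _ K, one_sub_X_sub_C_X_sq_mul_doubleSeries, mul_one]
  have expand : (1 - X - C X : R⟦X⟧⟦X⟧) ^ 2 * doubleSeries v =
      doubleSeries v - 2 * (X * doubleSeries v + C X * doubleSeries v) +
        (X * (X * doubleSeries v) + 2 * (X * (C X * doubleSeries v)) +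
          C X * (C X * doubleSeries v)) := by ring
  have hcoeff := congr(coeff (k + 2) (coeff (n + 2) $key))
  rw [expand] at hcoeff
  simpa [two_mul, mul_add, coeff_coeff_doubleSeries, coeff_succ_X_mul] using hcoeff

end GeneratingFunctions

section Samples

open Finset.HasAntidiagonal (antidiagonal)
open scoped ENNReal NNReal

variable {α β : Type*} [MeasurableSpace α] [MeasurableSpace β] {n : ℕ}

lemma measurable_insertNth (i : Fin (n + 1)) :
    Measurable fun z : α × (Fin n → α) ↦ (i.insertNth z.1 z.2 : Fin (n + 1) → α) :=
  (MeasurableEquiv.piFinSuccAbove (fun _ : Fin (n + 1) ↦ α) i).symm.measurable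

lemma lintegral_pi_succ (ν : Measure α) [SigmaFinite ν] (i : Fin (n + 1))
    {f : (Fin (n + 1) → α) → ℝ≥0∞} (hf : Measurable f) :
    ∫⁻ ω, f ω ∂(Measure.pi fun _ : Fin (n + 1) ↦ ν) =
      ∫⁻ x, ∫⁻ ω, f (i.insertNth x ω) ∂(Measure.pi fun _ : Fin n ↦ ν) ∂ν := by
  rw [← (measurePreserving_piFinSuccAbove (fun _ ↦ ν) i).symm.lintegral_comp hf]
  exact lintegral_prod _ (hf.comp (measurable_insertNth i)).aemeasurable

lemma ae_pi_forall {ν : Measure α} [SigmaFinite ν] {p : α → Prop} (hp : ∀ᵐ z ∂ν, p z) :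
    ∀ᵐ ω ∂(Measure.pi fun _ : Fin n ↦ ν), ∀ i, p (ω i) :=
  ae_all_iff.2 fun i ↦ (Measure.tendsto_eval_ae_ae (μ := fun _ : Fin n ↦ ν) (i := i)).eventually hp

/-- The functional `Φ` of finite sets is measurable when evaluated on the set of entries of a
tuple, whatever the length of the tuple. -/
def MeasurableOnTuples (Φ : Set α → ℝ≥0∞) : Prop :=
  ∀ m, Measurable fun ω : Fin m → α ↦ Φ (Set.range ω)

/-- The integral `∫ Φ {x₁, …, xₙ} dν(x₁) ⋯ dν(xₙ)`: the expectation of `Φ` over a random sample of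
size `n` when `ν` is a probability measure. -/
def sampleLIntegral (ν : Measure α) (n : ℕ) (Φ : Set α → ℝ≥0∞) : ℝ≥0∞ :=
  ∫⁻ ω, Φ (Set.range ω) ∂Measure.pi fun _ : Fin n ↦ ν

namespace MeasurableOnTuples

variable {Φ : Set α → ℝ≥0∞}

lemma comp (hΦ : MeasurableOnTuples Φ) {g : ℝ≥0∞ → ℝ≥0∞} (hg : Measurable g) :
    MeasurableOnTuples fun S ↦ g (Φ S) :=
  fun m ↦ hg.comp (hΦ m)

lemma comp_image {Φ : Set β → ℝ≥0∞} (hΦ : MeasurableOnTuples Φ) {f : α → β} (hf : Measurable f) :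
    MeasurableOnTuples fun S ↦ Φ (f '' S) := fun m ↦ by
  simp only [← Set.range_comp]
  exact (hΦ m).comp (measurable_pi_lambda _ fun i ↦ hf.comp (measurable_pi_apply i))

lemma insert_prod (hΦ : MeasurableOnTuples Φ) (n : ℕ) :
    Measurable fun z : α × (Fin n → α) ↦ Φ (insert z.1 (Set.range z.2)) := by
  have := (hΦ (n + 1)).comp (measurable_insertNth 0)
  simp only [Function.comp_def, Fin.range_insertNth] at this
  exact this

lemma insert (hΦ : MeasurableOnTuples Φ) (x : α) : MeasurableOnTuples fun S ↦ Φ (insert x S) :=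
  fun m ↦ (hΦ.insert_prod m).comp measurable_prodMk_left

lemma measurable_sampleLIntegral_insert (hΦ : MeasurableOnTuples Φ) (ν : Measure α) [SigmaFinite ν]
    (n : ℕ) : Measurable fun x ↦ sampleLIntegral ν n fun S ↦ Φ (Insert.insert x S) :=
  (hΦ.insert_prod n).lintegral_prod_right'

end MeasurableOnTuples

section

variable {Φ Ψ : Set α → ℝ≥0∞}

lemma sampleLIntegral_zero (ν : Measure α) : sampleLIntegral ν 0 Φ = Φ ∅ := by
  simp [sampleLIntegral]

lemma sampleLIntegral_succ (ν : Measure α) [SigmaFinite ν] (hΦ : MeasurableOnTuples Φ) (n : ℕ) :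
    sampleLIntegral ν (n + 1) Φ = ∫⁻ x, sampleLIntegral ν n (fun S ↦ Φ (insert x S)) ∂ν := by
  simp only [sampleLIntegral, lintegral_pi_succ ν 0 (hΦ _), Fin.range_insertNth]
  rfl

lemma sampleLIntegral_congr {ν : Measure α} [SigmaFinite ν] {A : Set α} (hA : ∀ᵐ z ∂ν, z ∈ A)
    (h : ∀ S ⊆ A, Φ S = Ψ S) : sampleLIntegral ν n Φ = sampleLIntegral ν n Ψ := by
  refine lintegral_congr_ae ?_
  filter_upwards [ae_pi_forall hA] with ω hω using h _ (Set.range_subset_iff.2 hω)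

lemma sampleLIntegral_smul_map (ν : Measure α) [IsFiniteMeasure ν] (c : ℝ≥0) {f : α → β}
    (hf : Measurable f) {Φ : Set β → ℝ≥0∞} (hΦ : MeasurableOnTuples Φ) (n : ℕ) :
    sampleLIntegral (c • ν.map f) n Φ = c ^ n * sampleLIntegral ν n fun S ↦ Φ (f '' S) := by
  induction n generalizing Φ with
  | zero => simp [sampleLIntegral_zero]
  | succ n ih =>
    have hΦf := hΦ.comp_image hf
    rw [sampleLIntegral_succ _ hΦ, lintegral_smul_measure,
      lintegral_map (hΦ.measurable_sampleLIntegral_insert _ n) hf, sampleLIntegral_succ _ hΦf]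
    simp only [ih (hΦ.insert _), ← Set.image_insert_eq]
    rw [lintegral_const_mul _ (hΦf.measurable_sampleLIntegral_insert ν n), ENNReal.smul_def,
      smul_eq_mul, pow_succ', mul_assoc]

lemma sampleLIntegral_add (μ ρ : Measure α) [IsFiniteMeasure μ] [IsFiniteMeasure ρ]
    (hΦ : MeasurableOnTuples Φ) (hρ : ∀ᵐ z ∂ρ, ∀ S, Φ (insert z S) = Φ S) (n : ℕ) :
    sampleLIntegral (μ + ρ) n Φ = ∑ p ∈ antidiagonal n,
      n.choose p.1 * (ρ Set.univ ^ p.2 * sampleLIntegral μ p.1 Φ) := by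
  induction n generalizing Φ with
  | zero => simp [sampleLIntegral_zero]
  | succ n ih =>
    have hmeas (m : ℕ) := hΦ.measurable_sampleLIntegral_insert μ m
    have hρ_part : ∫⁻ x, sampleLIntegral (μ + ρ) n (fun S ↦ Φ (insert x S)) ∂ρ =
        ρ Set.univ * sampleLIntegral (μ + ρ) n Φ := by
      rw [mul_comm, ← lintegral_const]
      refine lintegral_congr_ae ?_
      filter_upwards [hρ] with x hx
      simp only [hx]
    have hμ_part : ∫⁻ x, sampleLIntegral (μ + ρ) n (fun S ↦ Φ (insert x S)) ∂μ =
        ∑ p ∈ antidiagonal n,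
          n.choose p.1 * (ρ Set.univ ^ p.2 * sampleLIntegral μ (p.1 + 1) Φ) := by
      have hinsert (x : α) : ∀ᵐ z ∂ρ, ∀ S, Φ (insert x (insert z S)) = Φ (insert x S) := by
        filter_upwards [hρ] with z hz S
        rw [Set.insert_comm, hz]
      simp_rw [fun x ↦ ih (hΦ.insert x) (hinsert x)]
      rw [lintegral_finsetSum _ fun p _ ↦ ((hmeas p.1).const_mul _).const_mul _]
      refine Finset.sum_congr rfl fun p _ ↦ ?_
      rw [lintegral_const_mul _ ((hmeas p.1).const_mul _), lintegral_const_mul _ (hmeas p.1),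
        ← sampleLIntegral_succ μ hΦ]
    rw [sampleLIntegral_succ _ hΦ, lintegral_add_measure, hμ_part, hρ_part, ih hΦ hρ,
      Finset.sum_antidiagonal_choose_succ_mul
        (fun j a ↦ ρ Set.univ ^ a * sampleLIntegral μ j Φ), add_comm, Finset.mul_sum]
    congr 1
    · exact Finset.sum_congr rfl fun p _ ↦ by ring
    · refine Finset.sum_congr rfl fun p hp ↦ ?_
      rw [Nat.choose_symm_of_eq_add (Finset.HasAntidiagonal.mem_antidiagonal.1 hp).symm]

end

section FirstPoint

lemma sum_indicator_forall_le_of_injective {ι γ : Type*} [Fintype ι] [Nonempty ι]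
    {r : γ → ℝ} {ω : ι → γ} (hω : Function.Injective fun i ↦ r (ω i))
    (f : (ι → γ) → ℝ≥0∞) :
    ∑ i, {ω : ι → γ | ∀ j, r (ω i) ≤ r (ω j)}.indicator f ω = f ω := by
  obtain ⟨i, hi⟩ := Finite.exists_min fun i ↦ r (ω i)
  rw [Finset.sum_eq_single i]
  · exact Set.indicator_of_mem (Set.mem_ofPred.2 hi) f
  · refine fun i' _ hne ↦ Set.indicator_of_notMem (fun hi' ↦ hne (hω ?_)) f
    exact le_antisymm (Set.mem_ofPred.1 hi' i) (hi i')
  · simp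

variable {ν : Measure α} [SigmaFinite ν] {r : α → ℝ}

lemma ae_pi_injective (hr : Measurable r) (hne : ∀ c, ∀ᵐ z ∂ν, r z ≠ c) :
    ∀ᵐ ω ∂(Measure.pi fun _ : Fin (n + 1) ↦ ν), Function.Injective fun i ↦ r (ω i) := by
  have hpair (i : Fin (n + 1)) (j : Fin n) :
      ∀ᵐ ω ∂(Measure.pi fun _ : Fin (n + 1) ↦ ν), r (ω (i.succAbove j)) ≠ r (ω i) := by
    have hmeas : MeasurableSet {ω : Fin (n + 1) → α | r (ω (i.succAbove j)) = r (ω i)} :=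
      measurableSet_eq_fun (by fun_prop) (by fun_prop)
    rw [ae_iff]
    simp only [not_not]
    rw [← lintegral_indicator_one hmeas, lintegral_pi_succ ν i (measurable_one.indicator hmeas)]
    have hinner (x : α) : ∫⁻ ω, {ω : Fin (n + 1) → α | r (ω (i.succAbove j)) = r (ω i)}.indicator 1
        (i.insertNth x ω : Fin (n + 1) → α) ∂(Measure.pi fun _ : Fin n ↦ ν) = (0 : ℝ≥0∞) := by
      refine lintegral_eq_zero_of_ae_eq_zero ?_
      filter_upwards [ae_pi_forall (hne (r x))] with ω hω
      simp [hω j]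
    simp [hinner]
  filter_upwards [ae_all_iff.2 fun i ↦ ae_all_iff.2 (hpair i)] with ω hω i j hij
  by_contra hne
  obtain ⟨j', rfl⟩ := Fin.exists_succAbove_eq (Ne.symm hne)
  exact hω i j' hij.symm

lemma sampleLIntegral_succ_eq_first (hr : Measurable r) (hne : ∀ c, ∀ᵐ z ∂ν, r z ≠ c)
    {Φ : Set α → ℝ≥0∞} (hΦ : MeasurableOnTuples Φ) (n : ℕ) :
    sampleLIntegral ν (n + 1) Φ = (n + 1) * ∫⁻ p,
      sampleLIntegral (ν.restrict {z | r p ≤ r z}) n (fun S ↦ Φ (insert p S)) ∂ν := by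
  set first : Fin (n + 1) → Set (Fin (n + 1) → α) := fun i ↦ {ω | ∀ j, r (ω i) ≤ r (ω j)}
  have hfirst (i) : MeasurableSet (first i) := by
    simp only [first, Set.ofPred_forall]
    exact .iInter fun j ↦ measurableSet_le (by fun_prop) (by fun_prop)
  have hterm (i) : ∫⁻ ω, (first i).indicator (fun ω ↦ Φ (Set.range ω)) ω
      ∂(Measure.pi fun _ : Fin (n + 1) ↦ ν) = ∫⁻ p,
        sampleLIntegral (ν.restrict {z | r p ≤ r z}) n (fun S ↦ Φ (insert p S)) ∂ν := by
    rw [lintegral_pi_succ ν i ((hΦ (n + 1)).indicator (hfirst i))]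
    refine lintegral_congr fun p ↦ ?_
    rw [sampleLIntegral, ← Measure.restrict_pi_pi, ← lintegral_indicator
      (.univ_pi fun _ ↦ measurableSet_le measurable_const hr)]
    refine lintegral_congr fun ω ↦ ?_
    have hiff : (i.insertNth p ω : Fin (n + 1) → α) ∈ first i ↔
        ω ∈ Set.univ.pi fun _ ↦ {z | r p ≤ r z} := by
      simp [first, Fin.forall_iff_succAbove i]
    exact Set.indicator_eq_indicator hiff congr(Φ $(Fin.range_insertNth i p ω))
  have hsum : ∀ᵐ ω ∂(Measure.pi fun _ : Fin (n + 1) ↦ ν), Φ (Set.range ω) =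
      ∑ i, (first i).indicator (fun ω ↦ Φ (Set.range ω)) ω := by
    filter_upwards [ae_pi_injective hr hne] with ω hω
    exact (sum_indicator_forall_le_of_injective hω fun ω ↦ Φ (Set.range ω)).symm
  rw [sampleLIntegral, lintegral_congr_ae hsum,
    lintegral_finsetSum _ fun i _ ↦ (hΦ (n + 1)).indicator (hfirst i)]
  simp [hterm]

end FirstPoint

end Samples

section Convexity

variable {E : Type*} [AddCommGroup E] [Module ℝ E]

lemma exists_mem_segment_eq_zero (f : E →ᵃ[ℝ] ℝ) {x y : E} (hx : f x ≤ 0) (hy : 0 ≤ f y) :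
    ∃ w ∈ segment ℝ x y, f w = 0 := by
  rw [← Set.mem_image, image_segment, segment_eq_Icc (hx.trans hy)]
  exact ⟨hx, hy⟩

lemma convex_union_halfSpace {K A : Set E} (hK : Convex ℝ K) (hA : Convex ℝ A) (hAK : A ⊆ K)
    (f : E →ᵃ[ℝ] ℝ) (hf : ∀ z ∈ K, f z = 0 → z ∈ A) : Convex ℝ (A ∪ {z ∈ K | 0 ≤ f z}) := by
  have hB : Convex ℝ {z ∈ K | 0 ≤ f z} := hK.inter ((convex_Ici (𝕜 := ℝ) (0 : ℝ)).affine_preimage f)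
  have mixed {x y z : E} (hx : x ∈ A) (hy : y ∈ {z ∈ K | 0 ≤ f z}) (hz : z ∈ segment ℝ x y) :
      z ∈ A ∪ {z ∈ K | 0 ≤ f z} := by
    have hzK : z ∈ K := hK.segment_subset (hAK hx) hy.1 hz
    by_cases hfz : 0 ≤ f z
    · exact .inr ⟨hzK, hfz⟩
    obtain ⟨w, hw, hfw⟩ := exists_mem_segment_eq_zero f (not_le.1 hfz).le hy.2
    have hwA : w ∈ A := hf w (hK.segment_subset hzK hy.1 hw) hfw
    rw [mem_segment_iff_wbtw] at hz hw
    exact .inl (hA.segment_subset hx hwA (mem_segment_iff_wbtw.2 (hz.trans_right_left hw)))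
  rw [convex_iff_segment_subset]
  rintro x (hx | hx) y (hy | hy)
  · exact (hA.segment_subset hx hy).trans Set.subset_union_left
  · exact fun z ↦ mixed hx hy
  · exact fun z hz ↦ mixed hy hx (segment_symm ℝ x y ▸ hz)
  · exact (hB.segment_subset hx hy).trans Set.subset_union_right

lemma convexHull_insert_of_mem_convexHull {S : Set E} {z : E} (hz : z ∈ convexHull ℝ S) :
    convexHull ℝ (insert z S) = convexHull ℝ S :=
  (convexHull_min (Set.insert_subset hz (subset_convexHull ℝ S)) (convex_convexHull ℝ S)).antisymm
    (convexHull_mono (Set.subset_insert z S))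

lemma convexHull_range_eq_image_stdSimplex {ι : Type*} [Fintype ι] (x : ι → E) :
    convexHull ℝ (Set.range x) = Fintype.linearCombination ℝ x '' stdSimplex ℝ ι := by
  classical
  have himage := (Fintype.linearCombination ℝ x).image_convexHull
    (Set.range fun i ↦ Pi.single i (1 : ℝ))
  rw [convexHull_rangle_single_eq_stdSimplex, ← Set.range_comp] at himage
  simpa [Function.comp_def] using himage.symm

end Convexity

section Volume

variable {E : Type*} [NormedAddCommGroup E] [NormedSpace ℝ E]

lemma isClosed_setOf_mem_convexHull_range_s2 (m : ℕ) :
    IsClosed {z : (Fin m → E) × E | z.2 ∈ convexHull ℝ (Set.range z.1)} := by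
  have heq : {z : (Fin m → E) × E | z.2 ∈ convexHull ℝ (Set.range z.1)} = Prod.snd ''
      {y : stdSimplex ℝ (Fin m) × ((Fin m → E) × E) | ∑ i, y.1.1 i • y.2.1 i = y.2.2} := by
    ext ⟨ω, x⟩
    simp [convexHull_range_eq_image_stdSimplex, Fintype.linearCombination_apply]
  rw [heq]
  refine isClosedMap_snd_of_compactSpace _ (isClosed_eq ?_ (by fun_prop))
  exact continuous_finsetSum _ fun i _ ↦ ((continuous_apply i).comp
    (continuous_subtype_val.comp continuous_fst)).smul (by fun_prop)

variable [MeasurableSpace E] [BorelSpace E] (μ : Measure E)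

lemma measurableOnTuples_measure_convexHull [SecondCountableTopology E] [SFinite μ] :
    MeasurableOnTuples fun S ↦ μ (convexHull ℝ S) := fun m ↦
  measurable_measure_prodMk_left (isClosed_setOf_mem_convexHull_range_s2 m).measurableSet

lemma measure_image_affineMap [FiniteDimensional ℝ E] [μ.IsAddHaarMeasure] (f : E →ᵃ[ℝ] E)
    (S : Set E) : μ (f '' S) = ENNReal.ofReal |f.linear.det| * μ S := by
  rw [f.decomp, show ⇑f.linear + (fun _ ↦ f 0) = (· + f 0) ∘ f.linear from rfl, Set.image_comp,
    Set.image_add_right, measure_preimage_add_right, Measure.addHaar_image_linearMap]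

lemma restrict_image_affineMap [FiniteDimensional ℝ E] [μ.IsAddHaarMeasure] (f : E →ᵃ[ℝ] E)
    (K : Set E) :
    μ.restrict (f '' K) = Real.toNNReal |f.linear.det| • (μ.restrict K).map f := by
  have hf : Measurable f := f.continuous_of_finiteDimensional.measurable
  ext A hA
  rw [Measure.smul_apply, Measure.map_apply hf hA, Measure.restrict_apply hA,
    Measure.restrict_apply (hf hA), Set.inter_comm, Set.inter_comm, ← Set.image_preimage_inter,
    measure_image_affineMap, ENNReal.smul_def, smul_eq_mul, ENNReal.ofReal]

end Volume

section Triangle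

lemma mem_T {z : ℝ × ℝ} : z ∈ T ↔ 0 ≤ z.1 ∧ 0 ≤ z.2 ∧ z.1 + z.2 ≤ 1 := by
  constructor
  · have hconvex : Convex ℝ {z : ℝ × ℝ | 0 ≤ z.1 ∧ 0 ≤ z.2 ∧ z.1 + z.2 ≤ 1} :=
      (convex_halfSpace_ge (LinearMap.fst ℝ ℝ ℝ).isLinear 0).inter
        ((convex_halfSpace_ge (LinearMap.snd ℝ ℝ ℝ).isLinear 0).inter
          (convex_halfSpace_le (LinearMap.fst ℝ ℝ ℝ + LinearMap.snd ℝ ℝ ℝ).isLinear 1))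
    refine fun hz ↦ convexHull_min ?_ hconvex hz
    rintro w (rfl | rfl | rfl) <;> norm_num
  · rintro ⟨h1, h2, h3⟩
    have hvertex : ∀ w ∈ ({(0, 0), (1, 0), (0, 1)} : Set (ℝ × ℝ)), w ∈ T :=
      fun _ hw ↦ subset_convexHull ℝ _ hw
    have hT : Convex ℝ T := convex_convexHull ℝ _
    have hweights : ∀ i ∈ Finset.univ, 0 ≤ ![1 - z.1 - z.2, z.1, z.2] i := by
      have h0 : 0 ≤ 1 - z.1 - z.2 := by linarith
      simpa [Fin.forall_fin_succ, h1, h2] using h0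
    have hsum : ∑ i, ![1 - z.1 - z.2, z.1, z.2] i = 1 := by
      rw [Fin.sum_univ_three]
      change 1 - z.1 - z.2 + z.1 + z.2 = 1
      ring
    have hcomb := hT.sum_mem (t := Finset.univ) (w := ![1 - z.1 - z.2, z.1, z.2])
      (z := ![(0, 0), (1, 0), (0, 1)]) hweights
      hsum (by simp [Fin.forall_fin_succ, hvertex])
    simpa [Fin.sum_univ_three] using hcomb

lemma convex_T : Convex ℝ T := convex_convexHull ℝ _

lemma measurableSet_T : MeasurableSet T :=
  ((Set.toFinite _).isCompact_convexHull ℝ).measurableSet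

/-- The convex hull of `S` and the two corners `(1, 0)` and `(0, 1)`. -/
def chainHull (S : Set (ℝ × ℝ)) : Set (ℝ × ℝ) := convexHull ℝ (S ∪ {(1, 0), (0, 1)})

lemma chainHull_mono {S S' : Set (ℝ × ℝ)} (h : S ⊆ S') : chainHull S ⊆ chainHull S' :=
  convexHull_mono (Set.union_subset_union_left _ h)

lemma subset_chainHull (S : Set (ℝ × ℝ)) : S ⊆ chainHull S :=
  Set.subset_union_left.trans (subset_convexHull ℝ _)

lemma corners_subset_chainHull (S : Set (ℝ × ℝ)) : {(1, 0), (0, 1)} ⊆ chainHull S :=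
  Set.subset_union_right.trans (subset_convexHull ℝ _)

lemma convex_chainHull (S : Set (ℝ × ℝ)) : Convex ℝ (chainHull S) := convex_convexHull ℝ _

lemma chainHull_singleton_origin : chainHull {(0, 0)} = T := by
  rw [chainHull, T, Set.singleton_union]

lemma chainHull_subset_T {S : Set (ℝ × ℝ)} (hS : S ⊆ T) : chainHull S ⊆ T :=
  convexHull_min (Set.union_subset hS (by rintro _ (rfl | rfl) <;> norm_num [mem_T])) convex_T

lemma chainHull_insert_of_mem {S : Set (ℝ × ℝ)} {z : ℝ × ℝ} (hz : z ∈ chainHull S) :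
    chainHull (insert z S) = chainHull S := by
  rw [chainHull, Set.insert_union, convexHull_insert_of_mem_convexHull hz, chainHull]

lemma mk_one_sub_mem_chainHull (S : Set (ℝ × ℝ)) {y : ℝ} (hy : 0 ≤ y) (hy1 : y ≤ 1) :
    (1 - y, y) ∈ chainHull S := by
  have h10 := corners_subset_chainHull S (.inl rfl)
  have h01 := corners_subset_chainHull S (.inr rfl)
  simpa using convex_chainHull S h10 h01 (sub_nonneg.2 hy1) hy (sub_add_cancel 1 y)

/-- The affine map fixing the corners `(1, 0)` and `(0, 1)` and sending the origin to `p`. -/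
def cornerMap (p : ℝ × ℝ) : (ℝ × ℝ) →ᵃ[ℝ] ℝ × ℝ :=
  (LinearMap.transvection (-(LinearMap.fst ℝ ℝ ℝ + LinearMap.snd ℝ ℝ ℝ)) p).toAffineMap +
    AffineMap.const ℝ _ p

lemma cornerMap_apply (p z : ℝ × ℝ) : cornerMap p z = z + (1 - z.1 - z.2) • p := by
  change z + -(z.1 + z.2) • p + p = _
  module

lemma det_linear_cornerMap (p : ℝ × ℝ) : (cornerMap p).linear.det = 1 - p.1 - p.2 := by
  have hlinear : (cornerMap p).linear =
      LinearMap.transvection (-(LinearMap.fst ℝ ℝ ℝ + LinearMap.snd ℝ ℝ ℝ)) p := by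
    simp [cornerMap]
  rw [hlinear, LinearMap.transvection.det]
  simp only [LinearMap.neg_apply, LinearMap.add_apply, LinearMap.fst_apply, LinearMap.snd_apply]
  ring

lemma chainHull_image_cornerMap (p : ℝ × ℝ) (S : Set (ℝ × ℝ)) :
    chainHull (cornerMap p '' S) = cornerMap p '' chainHull S := by
  rw [chainHull, chainHull, AffineMap.image_convexHull, Set.image_union, Set.image_pair]
  simp [cornerMap_apply]

lemma cornerMap_image_T (p : ℝ × ℝ) : cornerMap p '' T = chainHull {p} := by
  rw [← chainHull_singleton_origin, ← chainHull_image_cornerMap, Set.image_singleton,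
    cornerMap_apply]
  simp [Prod.mk_zero_zero]

/-- The horizontal contraction by the factor `s`, which keeps the vertical axis fixed. -/
def squeeze (s : ℝ) : (ℝ × ℝ) →ᵃ[ℝ] ℝ × ℝ :=
  ((LinearMap.lsmul ℝ ℝ s).prodMap LinearMap.id).toAffineMap

lemma squeeze_apply (s : ℝ) (z : ℝ × ℝ) : squeeze s z = (s * z.1, z.2) := rfl

lemma det_linear_squeeze (s : ℝ) : (squeeze s).linear.det = s := by
  simp [squeeze, LinearMap.det_prodMap]

lemma squeeze_image_T {s : ℝ} (hs : 0 < s) (hs1 : s ≤ 1) :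
    squeeze s '' T = {z ∈ T | z.1 ≤ s * (1 - z.2)} := by
  ext z
  simp only [Set.mem_image, Set.mem_ofPred_eq, mem_T, squeeze_apply]
  constructor
  · rintro ⟨w, ⟨h1, h2, h3⟩, rfl⟩
    exact ⟨⟨by positivity, h2, by nlinarith⟩, by dsimp only; gcongr; linarith⟩
  · rintro ⟨⟨h1, h2, h3⟩, h⟩
    refine ⟨(z.1 / s, z.2), ⟨by positivity, h2, ?_⟩, ?_⟩
    · rw [← div_le_iff₀' hs] at h
      linarith
    · ext <;> simp [mul_div_cancel₀, hs.ne']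

lemma chainHull_singleton_horizontal {s : ℝ} (hs : 0 ≤ s) (hs1 : s < 1) :
    chainHull {(s, 0)} = {z ∈ T | s * (1 - z.2) ≤ z.1} := by
  have hpos : 0 < 1 - s := sub_pos.2 hs1
  rw [← cornerMap_image_T]
  ext z
  simp only [Set.mem_image, Set.mem_ofPred_eq, mem_T, cornerMap_apply]
  constructor
  · rintro ⟨w, ⟨_, h2, h3⟩, rfl⟩
    simp only [Prod.smul_mk, smul_eq_mul, mul_zero, Prod.fst_add, Prod.snd_add, add_zero]
    exact ⟨⟨by nlinarith, h2, by nlinarith⟩, by nlinarith⟩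
  · rintro ⟨⟨_, h2, h3⟩, h⟩
    refine ⟨((z.1 - s * (1 - z.2)) / (1 - s), z.2),
      ⟨div_nonneg (sub_nonneg.2 h) hpos.le, h2, ?_⟩, ?_⟩
    · rw [← le_sub_iff_add_le, div_le_iff₀ hpos]
      linarith
    · ext
      · simp only [Prod.smul_mk, smul_eq_mul, mul_zero, Prod.mk_add_mk, add_zero]
        field_simp
        ring
      · simp

lemma swap_mem_chainHull_image_swap {S : Set (ℝ × ℝ)} {z : ℝ × ℝ} :
    z.swap ∈ chainHull (Prod.swap '' S) ↔ z ∈ chainHull S := by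
  have himage : chainHull (Prod.swap '' S) = Prod.swap '' chainHull S := by
    have := (LinearEquiv.prodComm ℝ ℝ ℝ).toLinearMap.image_convexHull (S ∪ {(1, 0), (0, 1)})
    simpa [chainHull, Set.image_union, Set.image_pair, Set.pair_comm] using this.symm
  rw [himage, Prod.swap_injective.mem_set_image]

lemma chainHull_singleton_vertical {h : ℝ} (hh : 0 ≤ h) (hh1 : h < 1) :
    chainHull {(0, h)} = {z ∈ T | h * (1 - z.1) ≤ z.2} := by
  ext z
  rw [← swap_mem_chainHull_image_swap, Set.image_singleton, Prod.swap_prod_mk,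
    chainHull_singleton_horizontal hh hh1]
  simp [mem_T, and_left_comm, add_comm]

end Triangle

section Beta

open ProbabilityTheory Set
open scoped ENNReal Nat

@[fun_prop]
lemma measurable_betaPDF (α β : ℝ) : Measurable (betaPDF α β) :=
  (measurable_betaPDFReal α β).ennreal_ofReal

lemma lintegral_betaMeasure_pow_mul_pow {α β : ℝ} (hα : 0 < α) (hβ : 0 < β) (m l : ℕ) :
    ∫⁻ x, ENNReal.ofReal (x ^ m * (1 - x) ^ l) ∂betaMeasure α β =
      ENNReal.ofReal (beta (α + m) (β + l) / beta α β) := by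
  have hα' : 0 < α + m := by positivity
  have hβ' : 0 < β + l := by positivity
  have hpos := beta_pos hα hβ
  have hpos' := beta_pos hα' hβ'
  have hdensity (x : ℝ) : betaPDF α β x * ENNReal.ofReal (x ^ m * (1 - x) ^ l) =
      ENNReal.ofReal (beta (α + m) (β + l) / beta α β) * betaPDF (α + m) (β + l) x := by
    by_cases hx : 0 < x ∧ x < 1
    · have hx1 : 0 < 1 - x := by linarith [hx.2]
      rw [betaPDF_of_pos_lt_one hx.1 hx.2, betaPDF_of_pos_lt_one hx.1 hx.2,
        ← ENNReal.ofReal_mul (by have := hx.1; positivity), ← ENNReal.ofReal_mul (by positivity),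
        add_sub_right_comm, add_sub_right_comm, Real.rpow_add_natCast hx.1.ne',
        Real.rpow_add_natCast hx1.ne']
      congr 1
      field_simp
    · simp [betaPDF_eq, hx]
  rw [betaMeasure, lintegral_withDensity_eq_lintegral_mul _ (by fun_prop)
    (by fun_prop)]
  simp only [Pi.mul_apply, hdensity]
  rw [lintegral_const_mul _ (by fun_prop), lintegral_betaPDF_eq_one hα' hβ',
    mul_one]

lemma beta_natCast_add_one (m l : ℕ) : beta (m + 1) (l + 1) = m ! * l ! / (m + l + 1)! := by
  rw [beta, Real.Gamma_nat_eq_factorial, Real.Gamma_nat_eq_factorial,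
    ← Real.Gamma_nat_eq_factorial (m + l + 1)]
  push_cast
  ring_nf

lemma beta_one_one : beta 1 1 = 1 := by
  simpa using beta_natCast_add_one 0 0

lemma beta_one_two : beta 1 2 = 1 / 2 := by
  simpa [one_add_one_eq_two] using beta_natCast_add_one 0 1

lemma lintegral_one_sub_pow_betaMeasure_one_one (m : ℕ) :
    ∫⁻ x, ENNReal.ofReal ((1 - x) ^ m) ∂betaMeasure 1 1 = ENNReal.ofReal (1 / (m + 1)) := by
  have h := lintegral_betaMeasure_pow_mul_pow one_pos one_pos 0 m
  simp only [pow_zero, one_mul] at h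
  rw [h, add_comm 1 ((0 : ℕ) : ℝ), add_comm 1 (m : ℝ), beta_natCast_add_one, beta_one_one,
    zero_add, Nat.factorial_succ, Nat.factorial_zero]
  congr 1
  push_cast
  field_simp

/-- The mixed moment `E[U ^ m * (1 - U) ^ l]` of a random variable `U` with law Beta(1, 2), the law
of the first coordinate of a uniform point of `T`. -/
def betaOneTwoMoment (m l : ℕ) : ℝ := 2 * (m ! * (l + 1)! / (m + l + 2)!)

lemma betaOneTwoMoment_nonneg (m l : ℕ) : 0 ≤ betaOneTwoMoment m l := by
  unfold betaOneTwoMoment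
  positivity

lemma lintegral_pow_mul_one_sub_pow_betaMeasure_one_two (m l : ℕ) :
    ∫⁻ x, ENNReal.ofReal (x ^ m * (1 - x) ^ l) ∂betaMeasure 1 2 =
      ENNReal.ofReal (betaOneTwoMoment m l) := by
  have hbeta := beta_natCast_add_one m (l + 1)
  have hl : (2 : ℝ) + l = (l + 1 : ℕ) + 1 := by
    push_cast
    ring
  rw [lintegral_betaMeasure_pow_mul_pow one_pos two_pos, add_comm 1 (m : ℝ), hl, hbeta,
    beta_one_two, div_div_eq_mul_div, div_one, mul_comm]
  rfl

lemma ae_betaMeasure_mem_Ioo (α β : ℝ) : ∀ᵐ x ∂betaMeasure α β, x ∈ Ioo 0 1 := by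
  rw [betaMeasure, ae_withDensity_iff (by fun_prop)]
  refine ae_of_all _ fun x hx ↦ ?_
  by_contra hx'
  exact hx (by rw [betaPDF_eq, if_neg (by exact hx'), ENNReal.ofReal_zero])

lemma ae_betaMeasure_ne (α β c : ℝ) : ∀ᵐ x ∂betaMeasure α β, x ≠ c :=
  (withDensity_absolutelyContinuous _ _).ae_le (Measure.ae_ne volume c)

instance : IsProbabilityMeasure (betaMeasure 1 1) :=
  isProbabilityMeasureBeta one_pos one_pos

instance : IsProbabilityMeasure (betaMeasure 1 2) :=
  isProbabilityMeasureBeta one_pos two_pos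

end Beta

section UniformLaw

open ProbabilityTheory Set

/-- The point with first coordinate `u.1` on the line through `(1, 0)` and `(0, u.2)`. -/
def fanPoint (u : ℝ × ℝ) : ℝ × ℝ := (u.1, (1 - u.1) * u.2)

/-- The height at which the line through `(1, 0)` and `z` meets the vertical axis. It orders the
points of `T` by angle as seen from the corner `(1, 0)`. -/
def fanHeight (z : ℝ × ℝ) : ℝ := z.2 / (1 - z.1)

@[fun_prop]
lemma measurable_fanPoint : Measurable fanPoint := by
  unfold fanPoint
  fun_prop

@[fun_prop]
lemma measurable_fanHeight : Measurable fanHeight := by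
  unfold fanHeight
  fun_prop

lemma fanPoint_mem_T_iff {u : ℝ × ℝ} (h10 : u.1 ≠ 0) (h11 : u.1 ≠ 1) (h20 : u.2 ≠ 0)
    (h21 : u.2 ≠ 1) : fanPoint u ∈ T ↔ u.1 ∈ Ioo 0 1 ∧ u.2 ∈ Ioo 0 1 := by
  simp only [fanPoint, mem_T]
  constructor
  · rintro ⟨h1, h2, h3⟩
    have hlt : u.1 < 1 := lt_of_le_of_ne (by linarith) h11
    have hpos : 0 < 1 - u.1 := sub_pos.2 hlt
    rw [mul_nonneg_iff_of_pos_left hpos] at h2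
    rw [← le_sub_iff_add_le', mul_le_iff_le_one_right hpos] at h3
    exact ⟨⟨h1.lt_of_ne' h10, hlt⟩, h2.lt_of_ne' h20, h3.lt_of_ne h21⟩
  · rintro ⟨⟨h1, h2⟩, h3, h4⟩
    exact ⟨h1.le, (mul_pos (sub_pos.2 h2) h3).le, by nlinarith⟩

lemma fanHeight_fanPoint {u : ℝ × ℝ} (hu : u.1 < 1) : fanHeight (fanPoint u) = u.2 :=
  mul_div_cancel_left₀ _ (sub_pos.2 hu).ne'

lemma lintegral_eq_lintegral_abs_mul_comp_mul_left {a : ℝ} (ha : a ≠ 0) {f : ℝ → ENNReal}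
    (hf : Measurable f) : ∫⁻ y, f y = ∫⁻ h, ENNReal.ofReal |a| * f (a * h) := by
  nth_rw 1 [← Real.smul_map_volume_mul_left ha]
  rw [lintegral_smul_measure, lintegral_map hf (by fun_prop), smul_eq_mul,
    lintegral_const_mul _ (by fun_prop)]

lemma two_mul_indicator_fanPoint_eq_betaPDF_mul (f : ℝ × ℝ → ENNReal) {u : ℝ × ℝ}
    (h10 : u.1 ≠ 0) (h11 : u.1 ≠ 1) (h20 : u.2 ≠ 0) (h21 : u.2 ≠ 1) :
    2 * (ENNReal.ofReal |1 - u.1| * T.indicator f (fanPoint u)) =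
      betaPDF 1 2 u.1 * betaPDF 1 1 u.2 * f (fanPoint u) := by
  by_cases hu : fanPoint u ∈ T
  · obtain ⟨⟨h1, h1'⟩, h2, h2'⟩ := (fanPoint_mem_T_iff h10 h11 h20 h21).1 hu
    rw [indicator_of_mem hu, betaPDF_of_pos_lt_one h1 h1', betaPDF_of_pos_lt_one h2 h2',
      beta_one_one, beta_one_two, abs_of_pos (sub_pos.2 h1')]
    norm_num [mul_assoc]
  · rw [indicator_of_notMem hu]
    rw [fanPoint_mem_T_iff h10 h11 h20 h21, not_and_or] at hu
    rcases hu with hu | hu <;> simp [betaPDF_eq, mem_Ioo.not.1 hu]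

lemma μT_eq_map_fanPoint : μT = ((betaMeasure 1 2).prod (betaMeasure 1 1)).map fanPoint := by
  refine Measure.ext_of_lintegral _ fun f hf ↦ ?_
  have hfT : Measurable (T.indicator f) := hf.indicator measurableSet_T
  have hslice {x : ℝ} (hx0 : x ≠ 0) (hx1 : x ≠ 1) : 2 * ∫⁻ y, T.indicator f (x, y) =
      ∫⁻ h, betaPDF 1 2 x * betaPDF 1 1 h * f (fanPoint (x, h)) := by
    rw [lintegral_eq_lintegral_abs_mul_comp_mul_left (sub_ne_zero.2 hx1.symm)
        (f := fun y ↦ T.indicator f (x, y)) (by fun_prop), ← lintegral_const_mul _ (by fun_prop)]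
    refine lintegral_congr_ae ?_
    filter_upwards [Measure.ae_ne volume 0, Measure.ae_ne volume 1] with h hh0 hh1
    exact two_mul_indicator_fanPoint_eq_betaPDF_mul f (u := (x, h)) hx0 hx1 hh0 hh1
  rw [lintegral_map hf (by fun_prop), betaMeasure, betaMeasure,
    prod_withDensity (by fun_prop) (by fun_prop), lintegral_withDensity_eq_lintegral_mul _
      (by fun_prop) (by fun_prop), μT, lintegral_smul_measure, smul_eq_mul,
    ← lintegral_indicator measurableSet_T, Measure.volume_eq_prod,
    lintegral_prod _ hfT.aemeasurable, lintegral_prod _ (Measurable.aemeasurable (by fun_prop)),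
    ← lintegral_const_mul _ hfT.lintegral_prod_right']
  refine lintegral_congr_ae ?_
  filter_upwards [Measure.ae_ne volume 0, Measure.ae_ne volume 1] with x hx0 hx1
  exact hslice hx0 hx1

instance : IsProbabilityMeasure μT := by
  rw [μT_eq_map_fanPoint]
  exact Measure.isProbabilityMeasure_map (by fun_prop)

lemma ae_mem_T : ∀ᵐ z ∂μT, z ∈ T :=
  Measure.ae_smul_measure (ae_restrict_mem measurableSet_T) 2

lemma map_fst_fanHeight :
    μT.map (fun z ↦ (z.1, fanHeight z)) = (betaMeasure 1 2).prod (betaMeasure 1 1) := by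
  rw [μT_eq_map_fanPoint, Measure.map_map (by fun_prop) (by fun_prop)]
  refine (Measure.map_congr ?_).trans Measure.map_id
  filter_upwards [Measure.quasiMeasurePreserving_fst.ae (ae_betaMeasure_mem_Ioo 1 2)] with u hu
  exact Prod.ext rfl (fanHeight_fanPoint hu.2)

lemma ae_fst_mem_Ioo : ∀ᵐ z ∂μT, z.1 ∈ Ioo 0 1 := by
  have h := Measure.quasiMeasurePreserving_fst (ν := betaMeasure 1 1) |>.ae
    (ae_betaMeasure_mem_Ioo 1 2)
  rw [← map_fst_fanHeight] at h
  exact ae_of_ae_map (f := fun z ↦ (z.1, fanHeight z)) (by fun_prop) h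

lemma ae_fanHeight_of_ae_betaMeasure {p : ℝ → Prop} (hp : ∀ᵐ h ∂betaMeasure 1 1, p h) :
    ∀ᵐ z ∂μT, p (fanHeight z) := by
  have h := Measure.quasiMeasurePreserving_snd (μ := betaMeasure 1 2) |>.ae hp
  rw [← map_fst_fanHeight] at h
  exact ae_of_ae_map (f := fun z ↦ (z.1, fanHeight z)) (by fun_prop) h

end UniformLaw

section Area

open scoped ENNReal

/-- Twice the area of the convex hull of `S` and the two corners; the triangle `T` has area `1` in
this normalization. -/
def area (S : Set (ℝ × ℝ)) : ℝ≥0∞ := 2 * volume (chainHull S)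

lemma area_mono {S S' : Set (ℝ × ℝ)} (h : S ⊆ S') : area S ≤ area S' :=
  mul_le_mul_right (measure_mono (chainHull_mono h)) _

lemma area_image_cornerMap (p : ℝ × ℝ) (S : Set (ℝ × ℝ)) :
    area (cornerMap p '' S) = ENNReal.ofReal |1 - p.1 - p.2| * area S := by
  rw [area, chainHull_image_cornerMap, measure_image_affineMap, det_linear_cornerMap, area]
  ring

lemma two_mul_volume_T : 2 * volume T = 1 := by
  simpa [μT] using measure_univ (μ := μT)

lemma area_singleton (p : ℝ × ℝ) : area {p} = ENNReal.ofReal |1 - p.1 - p.2| := by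
  rw [area, ← cornerMap_image_T, measure_image_affineMap, det_linear_cornerMap, mul_left_comm,
    two_mul_volume_T, mul_one]

lemma area_empty : area ∅ = 0 := by
  have hcorner := area_mono (Set.empty_subset {((1, 0) : ℝ × ℝ)})
  rwa [area_singleton, sub_self, sub_zero, abs_zero, ENNReal.ofReal_zero, nonpos_iff_eq_zero]
    at hcorner

lemma area_le_one {S : Set (ℝ × ℝ)} (hS : S ⊆ T) : area S ≤ 1 :=
  (mul_le_mul_right (measure_mono (chainHull_subset_T hS)) _).trans_eq two_mul_volume_T

lemma measurableOnTuples_area : MeasurableOnTuples area := by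
  have hmeas := ((measurableOnTuples_measure_convexHull volume).insert ((0, 1) : ℝ × ℝ)).insert
    (1, 0)
  have harea : area = fun S ↦ 2 * volume (convexHull ℝ (insert (0, 1) (insert (1, 0) S))) := by
    ext
    simp [area, chainHull, Set.insert_comm]
  exact harea ▸ hmeas.comp (measurable_const_mul 2)

lemma mem_squeeze_image_chainHull {s : ℝ} (S : Set (ℝ × ℝ)) {z : ℝ × ℝ} (hz : z ∈ T)
    (hs : z.1 = s * (1 - z.2)) : z ∈ squeeze s '' chainHull S := by
  obtain ⟨h1, h2, h3⟩ := mem_T.1 hz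
  refine ⟨(1 - z.2, z.2), mk_one_sub_mem_chainHull S h2 (by linarith), ?_⟩
  rw [squeeze_apply, ← hs]

lemma squeeze_image_chainHull_subset {s : ℝ} (hs : 0 < s) (hs1 : s ≤ 1) {W : Set (ℝ × ℝ)}
    (hW : W ⊆ T) : squeeze s '' chainHull W ⊆ {z ∈ T | z.1 ≤ s * (1 - z.2)} :=
  (Set.image_mono (chainHull_subset_T hW)).trans (squeeze_image_T hs hs1).subset

lemma chainHull_insert_squeeze {s : ℝ} (hs : 0 < s) (hs1 : s < 1) {W : Set (ℝ × ℝ)}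
    (hW : W ⊆ T) : chainHull (insert (s, 0) (squeeze s '' W)) =
    squeeze s '' chainHull W ∪ chainHull {(s, 0)} := by
  have himage : squeeze s '' chainHull W = convexHull ℝ (squeeze s '' W ∪ {(s, 0), (0, 1)}) := by
    rw [chainHull, AffineMap.image_convexHull, Set.image_union, Set.image_pair]
    simp [squeeze_apply]
  have hconvex : Convex ℝ (squeeze s '' chainHull W ∪ chainHull {(s, 0)}) := by
    let f : (ℝ × ℝ) →ᵃ[ℝ] ℝ :=
      (LinearMap.fst ℝ ℝ ℝ + s • LinearMap.snd ℝ ℝ ℝ).toAffineMap - AffineMap.const ℝ _ s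
    have hf (z : ℝ × ℝ) : f z = z.1 - s * (1 - z.2) := by
      change z.1 + s * z.2 - s = _
      ring
    have hhalf : chainHull {(s, 0)} = {z ∈ T | 0 ≤ f z} := by
      simp only [chainHull_singleton_horizontal hs.le hs1, hf, sub_nonneg]
    rw [hhalf]
    refine convex_union_halfSpace convex_T (himage ▸ convex_convexHull ℝ _)
      ((squeeze_image_chainHull_subset hs hs1.le hW).trans (Set.sep_subset _ _)) f
      fun z hz hfz ↦ mem_squeeze_image_chainHull W hz (sub_eq_zero.1 (hf z ▸ hfz))
  refine (convexHull_min ?_ hconvex).antisymm (Set.union_subset ?_ ?_)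
  · rw [Set.union_subset_iff, Set.insert_subset_iff]
    exact ⟨⟨.inr (subset_chainHull _ rfl),
      fun z hz ↦ .inl (Set.image_mono (subset_chainHull W) hz)⟩,
      fun z hz ↦ .inr (corners_subset_chainHull _ hz)⟩
  · rw [himage]
    refine convexHull_min (Set.union_subset ?_ ?_) (convex_chainHull _)
    · exact (Set.subset_insert _ _).trans (subset_chainHull _)
    · exact Set.insert_subset (subset_chainHull _ (.inl rfl))
        ((Set.subset_insert _ _).trans (corners_subset_chainHull _))
  · exact chainHull_mono (by simp)

lemma aedisjoint_squeeze_image_chainHull {s : ℝ} (hs : 0 < s) (hs1 : s < 1) {W : Set (ℝ × ℝ)}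
    (hW : W ⊆ T) : AEDisjoint volume (squeeze s '' chainHull W) (chainHull {(s, 0)}) := by
  have hvolume : volume (squeeze s '' chainHull ∅) = 0 := by
    have hempty : volume (chainHull ∅) = 0 := by simpa [area] using area_empty
    rw [measure_image_affineMap, hempty, mul_zero]
  refine measure_mono_null (fun z ⟨hz, hz'⟩ ↦ ?_) hvolume
  have hleft := squeeze_image_chainHull_subset hs hs1.le hW hz
  rw [chainHull_singleton_horizontal hs.le hs1] at hz'
  exact mem_squeeze_image_chainHull ∅ hz'.1 (hleft.2.antisymm hz'.2)

lemma area_insert_squeeze {s : ℝ} (hs : 0 < s) (hs1 : s < 1) {W : Set (ℝ × ℝ)} (hW : W ⊆ T) :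
    area (insert (s, 0) (squeeze s '' W)) =
      ENNReal.ofReal s * area W + ENNReal.ofReal (1 - s) := by
  have hmeas : MeasurableSet (chainHull {(s, 0)}) :=
    ((Set.toFinite _).isCompact_convexHull ℝ).measurableSet
  have hright : 2 * volume (chainHull {(s, 0)}) = ENNReal.ofReal (1 - s) := by
    rw [← area, area_singleton, sub_zero, abs_of_pos (sub_pos.2 hs1)]
  rw [area, chainHull_insert_squeeze hs hs1 hW,
    measure_union₀ hmeas.nullMeasurableSet (aedisjoint_squeeze_image_chainHull hs hs1 hW), mul_add,
    hright, measure_image_affineMap, det_linear_squeeze, abs_of_pos hs, area, mul_left_comm]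

end Area

section Decomposition

open Finset.HasAntidiagonal (antidiagonal)
open scoped ENNReal

lemma μT_restrict_image {f : (ℝ × ℝ) →ᵃ[ℝ] ℝ × ℝ} (hf : f '' T ⊆ T) :
    μT.restrict (f '' T) = Real.toNNReal |f.linear.det| • μT.map f := by
  rw [μT, Measure.restrict_smul, Measure.restrict_restrict_of_subset hf, restrict_image_affineMap,
    Measure.map_smul, smul_comm]

lemma μT_restrict_le_fanHeight {h : ℝ} (hh : 0 ≤ h) (hh1 : h < 1) :
    μT.restrict {z | h ≤ fanHeight z} = Real.toNNReal (1 - h) • μT.map (cornerMap (0, h)) := by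
  have himage : cornerMap (0, h) '' T = {z ∈ T | h * (1 - z.1) ≤ z.2} := by
    rw [cornerMap_image_T, chainHull_singleton_vertical hh hh1]
  have hae : {z | h ≤ fanHeight z} =ᵐ[μT] cornerMap (0, h) '' T := by
    rw [himage]
    filter_upwards [ae_mem_T, ae_fst_mem_Ioo] with z hzT hz1
    exact propext ((le_div_iff₀ (sub_pos.2 hz1.2)).trans (and_iff_right hzT).symm)
  rw [Measure.restrict_congr_set hae, μT_restrict_image (himage ▸ Set.sep_subset _ _),
    det_linear_cornerMap, sub_zero, abs_of_pos (sub_pos.2 hh1)]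

lemma cornerMap_fanHeight {z : ℝ × ℝ} (hz : z.1 < 1) : cornerMap (0, fanHeight z) (z.1, 0) = z := by
  ext
  · simp [cornerMap_apply]
  · simp [cornerMap_apply, fanHeight, mul_div_cancel₀ _ (sub_pos.2 hz).ne']

lemma sampleLIntegral_restrict_fanHeight {z : ℝ × ℝ} (hz : z.1 < 1)
    (hz' : fanHeight z ∈ Set.Ico 0 1) (n k : ℕ) :
    sampleLIntegral (μT.restrict {w | fanHeight z ≤ fanHeight w}) n
        (fun S ↦ area (insert z S) ^ k) =
      ENNReal.ofReal (1 - fanHeight z) ^ (n + k) *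
        sampleLIntegral μT n (fun S ↦ area (insert (z.1, 0) S) ^ k) := by
  have hmeas (p : ℝ × ℝ) : MeasurableOnTuples fun S ↦ area (insert p S) ^ k :=
    (measurableOnTuples_area.insert p).comp (measurable_id.pow_const k)
  have hinsert (S : Set (ℝ × ℝ)) : area (insert z (cornerMap (0, fanHeight z) '' S)) =
      ENNReal.ofReal (1 - fanHeight z) * area (insert (z.1, 0) S) := by
    nth_rw 1 [← cornerMap_fanHeight hz]
    rw [← Set.image_insert_eq, area_image_cornerMap, sub_zero, abs_of_pos (sub_pos.2 hz'.2)]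
  rw [μT_restrict_le_fanHeight hz'.1 hz'.2, sampleLIntegral_smul_map _ _
    (AffineMap.continuous_of_finiteDimensional _).measurable (hmeas z)]
  simp only [hinsert, mul_pow]
  rw [sampleLIntegral, lintegral_const_mul _ (hmeas _ n), pow_add, mul_assoc]
  rfl

lemma measurableSet_squeeze_image_T {s : ℝ} (hs : 0 < s) (hs1 : s ≤ 1) :
    MeasurableSet (squeeze s '' T) := by
  rw [squeeze_image_T hs hs1]
  exact measurableSet_T.inter (measurableSet_le measurable_fst (by fun_prop))

lemma μT_restrict_squeeze_image {s : ℝ} (hs : 0 < s) (hs1 : s ≤ 1) :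
    μT.restrict (squeeze s '' T) = Real.toNNReal s • μT.map (squeeze s) := by
  have hsubset : squeeze s '' T ⊆ T := squeeze_image_T hs hs1 ▸ Set.sep_subset _ _
  rw [μT_restrict_image hsubset, det_linear_squeeze, abs_of_pos hs]

lemma μT_compl_squeeze_image {s : ℝ} (hs : 0 < s) (hs1 : s ≤ 1) :
    μT (squeeze s '' T)ᶜ = ENNReal.ofReal (1 - s) := by
  have hmass : μT (squeeze s '' T) = ENNReal.ofReal s := by
    rw [← Measure.restrict_apply_univ, μT_restrict_squeeze_image hs hs1, Measure.smul_apply,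
      Measure.map_apply (AffineMap.continuous_of_finiteDimensional _).measurable .univ,
      Set.preimage_univ, measure_univ, ENNReal.smul_def, smul_eq_mul, mul_one, ENNReal.ofReal]
  rw [prob_compl_eq_one_sub (measurableSet_squeeze_image_T hs hs1), hmass,
    ENNReal.ofReal_sub 1 hs.le, ENNReal.ofReal_one]

lemma sampleLIntegral_insert_horizontal {g : ℝ≥0∞ → ℝ≥0∞} (hg : Measurable g) {s : ℝ}
    (hs : 0 < s) (hs1 : s < 1) (n : ℕ) :
    sampleLIntegral μT n (fun S ↦ g (area (insert (s, 0) S))) =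
      ∑ p ∈ antidiagonal n, n.choose p.1 * (ENNReal.ofReal (1 - s) ^ p.2 *
        (ENNReal.ofReal s ^ p.1 * sampleLIntegral μT p.1
          fun S ↦ g (ENNReal.ofReal s * area S + ENNReal.ofReal (1 - s)))) := by
  have hΦ : MeasurableOnTuples fun S ↦ g (area (insert (s, 0) S)) :=
    (measurableOnTuples_area.insert _).comp hg
  have hmeas := measurableSet_squeeze_image_T hs hs1.le
  have hsplit : μT = Real.toNNReal s • μT.map (squeeze s) + μT.restrict (squeeze s '' T)ᶜ := by
    rw [← μT_restrict_squeeze_image hs hs1.le, Measure.restrict_add_restrict_compl hmeas]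
  have hright : ∀ᵐ z ∂μT.restrict (squeeze s '' T)ᶜ, ∀ S,
      g (area (insert (s, 0) (insert z S))) = g (area (insert (s, 0) S)) := by
    filter_upwards [ae_restrict_of_ae ae_mem_T, ae_restrict_mem hmeas.compl] with z hzT hz S
    rw [squeeze_image_T hs hs1.le] at hz
    have hz_mem : z ∈ chainHull {(s, 0)} := by
      rw [chainHull_singleton_horizontal hs.le hs1]
      exact ⟨hzT, (not_le.1 fun hle ↦ hz ⟨hzT, hle⟩).le⟩
    rw [Set.insert_comm, area, area,
      chainHull_insert_of_mem (chainHull_mono (Set.singleton_subset_iff.2 (.inl rfl)) hz_mem)]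
  conv_lhs => rw [hsplit]
  rw [sampleLIntegral_add _ _ hΦ hright]
  refine Finset.sum_congr rfl fun p _ ↦ ?_
  have hsqueeze : sampleLIntegral μT p.1 (fun W ↦ g (area (insert (s, 0) (squeeze s '' W)))) =
      sampleLIntegral μT p.1 fun W ↦ g (ENNReal.ofReal s * area W + ENNReal.ofReal (1 - s)) :=
    sampleLIntegral_congr ae_mem_T fun W hW ↦ by rw [area_insert_squeeze hs hs1 hW]
  rw [Measure.restrict_apply_univ, μT_compl_squeeze_image hs hs1.le, sampleLIntegral_smul_map _ _
    (AffineMap.continuous_of_finiteDimensional _).measurable hΦ, hsqueeze]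
  rfl

end Decomposition

section Moments

open Finset.HasAntidiagonal (antidiagonal)
open ProbabilityTheory
open scoped ENNReal Nat

/-- The moment `E[V_n ^ k]`, as an extended nonnegative real. -/
def areaMoment (n k : ℕ) : ℝ≥0∞ := sampleLIntegral μT n fun S ↦ area S ^ k

lemma measurableOnTuples_area_pow (k : ℕ) : MeasurableOnTuples fun S ↦ area S ^ k :=
  measurableOnTuples_area.comp (measurable_id.pow_const k)

lemma area_range_le_one (n : ℕ) : ∀ᵐ ω ∂P n, area (Set.range ω) ≤ 1 := by
  filter_upwards [ae_pi_forall ae_mem_T] with ω hω using area_le_one (Set.range_subset_iff.2 hω)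

lemma areaMoment_ne_top (n k : ℕ) : areaMoment n k ≠ ∞ := by
  have hle : areaMoment n k ≤ ∫⁻ _, 1 ∂P n := lintegral_mono_ae <|
    (area_range_le_one n).mono fun ω hω ↦ pow_le_one₀ zero_le hω
  have : IsProbabilityMeasure (P n) := inferInstanceAs (IsProbabilityMeasure (Measure.pi _))
  exact ne_top_of_le_ne_top (by simp) hle

lemma q_eq_choose_mul_areaMoment (n k : ℕ) :
    q n k = (n + k).choose k * (areaMoment n k).toReal := by
  have hV (ω : Fin n → ℝ × ℝ) : V n ω ^ k = (area (Set.range ω) ^ k).toReal := by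
    rw [V, ENNReal.toReal_pow, area, ENNReal.toReal_mul]
    rfl
  simp only [q, hV]
  rw [integral_toReal (measurableOnTuples_area_pow k n).aemeasurable]
  · rfl
  · filter_upwards [area_range_le_one n] with ω hω
    exact ENNReal.pow_lt_top (hω.trans_lt ENNReal.one_lt_top)

lemma q_zero_left {k : ℕ} (hk : k ≠ 0) : q 0 k = 0 := by
  rw [q_eq_choose_mul_areaMoment, areaMoment, sampleLIntegral_zero, area_empty, zero_pow hk,
    ENNReal.toReal_zero, mul_zero]

lemma sampleLIntegral_affine_area_pow (n k : ℕ) (x y : ℝ≥0∞) :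
    sampleLIntegral μT n (fun S ↦ (x * area S + y) ^ k) =
      ∑ b ∈ antidiagonal k, k.choose b.1 * (x ^ b.1 * y ^ b.2 * areaMoment n b.1) := by
  have hexpand (S : Set (ℝ × ℝ)) : (x * area S + y) ^ k =
      ∑ b ∈ antidiagonal k, k.choose b.1 * (x ^ b.1 * y ^ b.2) * area S ^ b.1 := by
    rw [(Commute.all (x * area S) y).add_pow']
    refine Finset.sum_congr rfl fun b _ ↦ ?_
    rw [nsmul_eq_mul]
    ring
  simp only [hexpand, sampleLIntegral, areaMoment, ← mul_assoc]
  rw [lintegral_finsetSum _ fun b _ ↦ (measurableOnTuples_area_pow b.1 n).const_mul _]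
  exact Finset.sum_congr rfl fun b _ ↦ lintegral_const_mul _ (measurableOnTuples_area_pow b.1 n)

lemma sampleLIntegral_area_insert_horizontal_pow {s : ℝ} (hs : 0 < s) (hs1 : s < 1) (n k : ℕ) :
    sampleLIntegral μT n (fun S ↦ area (insert (s, 0) S) ^ k) =
      ∑ a ∈ antidiagonal n, ∑ b ∈ antidiagonal k, n.choose a.1 * k.choose b.1 *
        areaMoment a.1 b.1 * ENNReal.ofReal (s ^ (a.1 + b.1) * (1 - s) ^ (a.2 + b.2)) := by
  have hs' : 0 ≤ 1 - s := sub_nonneg.2 hs1.le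
  rw [sampleLIntegral_insert_horizontal (g := (· ^ k)) (measurable_id.pow_const k) hs hs1]
  refine Finset.sum_congr rfl fun a _ ↦ ?_
  simp only [sampleLIntegral_affine_area_pow, Finset.mul_sum]
  refine Finset.sum_congr rfl fun b _ ↦ ?_
  rw [ENNReal.ofReal_mul (by positivity), ENNReal.ofReal_pow hs.le, ENNReal.ofReal_pow hs']
  ring

lemma lintegral_sampleLIntegral_area_insert_horizontal_pow (n k : ℕ) :
    ∫⁻ s, sampleLIntegral μT n (fun S ↦ area (insert (s, 0) S) ^ k) ∂betaMeasure 1 2 =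
      ∑ a ∈ antidiagonal n, ∑ b ∈ antidiagonal k, n.choose a.1 * k.choose b.1 *
        areaMoment a.1 b.1 * ENNReal.ofReal (betaOneTwoMoment (a.1 + b.1) (a.2 + b.2)) := by
  have hae := (ae_betaMeasure_mem_Ioo 1 2).mono fun s hs ↦
    sampleLIntegral_area_insert_horizontal_pow hs.1 hs.2 n k
  rw [lintegral_congr_ae hae, lintegral_finsetSum _ fun a _ ↦ by fun_prop]
  refine Finset.sum_congr rfl fun a _ ↦ ?_
  rw [lintegral_finsetSum _ fun b _ ↦ by fun_prop]
  refine Finset.sum_congr rfl fun b _ ↦ ?_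
  rw [lintegral_const_mul _ (by fun_prop), lintegral_pow_mul_one_sub_pow_betaMeasure_one_two]

lemma areaMoment_succ_eq_lintegral_mul_lintegral (n k : ℕ) : areaMoment (n + 1) k = (n + 1) *
    ((∫⁻ s, sampleLIntegral μT n (fun S ↦ area (insert (s, 0) S) ^ k) ∂betaMeasure 1 2) *
      ∫⁻ h, ENNReal.ofReal ((1 - h) ^ (n + k)) ∂betaMeasure 1 1) := by
  have hΦ := measurableOnTuples_area_pow k
  have hfirst : ∀ᵐ z ∂μT,
      sampleLIntegral (μT.restrict {w | fanHeight z ≤ fanHeight w}) n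
        (fun S ↦ area (insert z S) ^ k) =
          sampleLIntegral μT n (fun S ↦ area (insert (z.1, 0) S) ^ k) *
            ENNReal.ofReal ((1 - fanHeight z) ^ (n + k)) := by
    filter_upwards [ae_fst_mem_Ioo, ae_fanHeight_of_ae_betaMeasure (ae_betaMeasure_mem_Ioo 1 1)]
      with z hz hz'
    rw [sampleLIntegral_restrict_fanHeight hz.2 (Set.Ioo_subset_Ico_self hz'),
      ENNReal.ofReal_pow (sub_nonneg.2 hz'.2.le), mul_comm]
  have hheight : Measurable fun h : ℝ ↦ ENNReal.ofReal ((1 - h) ^ (n + k)) := by fun_prop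
  have habscissa : Measurable fun s : ℝ ↦
      sampleLIntegral μT n (fun S ↦ area (insert (s, 0) S) ^ k) :=
    (hΦ.measurable_sampleLIntegral_insert μT n).comp
      (by fun_prop : Measurable fun s : ℝ ↦ (s, (0 : ℝ)))
  have hmeas : Measurable fun z : ℝ × ℝ ↦
      sampleLIntegral μT n (fun S ↦ area (insert (z.1, 0) S) ^ k) *
        ENNReal.ofReal ((1 - z.2) ^ (n + k)) :=
    (habscissa.comp measurable_fst).mul (hheight.comp measurable_snd)
  rw [← lintegral_prod_mul habscissa.aemeasurable hheight.aemeasurable, ← map_fst_fanHeight,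
    lintegral_map hmeas (by fun_prop), areaMoment,
    sampleLIntegral_succ_eq_first measurable_fanHeight
      (fun c ↦ ae_fanHeight_of_ae_betaMeasure (ae_betaMeasure_ne 1 1 c)) hΦ,
    lintegral_congr_ae hfirst]

lemma toReal_areaMoment_succ (n k : ℕ) : (areaMoment (n + 1) k).toReal = (n + 1) *
    ((∑ a ∈ antidiagonal n, ∑ b ∈ antidiagonal k, n.choose a.1 * k.choose b.1 *
      (areaMoment a.1 b.1).toReal * betaOneTwoMoment (a.1 + b.1) (a.2 + b.2)) *
        (1 / (n + k + 1))) := by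
  have hfinite (a b : ℕ × ℕ) : n.choose a.1 * k.choose b.1 * areaMoment a.1 b.1 *
      ENNReal.ofReal (betaOneTwoMoment (a.1 + b.1) (a.2 + b.2)) ≠ ∞ := by
    have := areaMoment_ne_top a.1 b.1
    finiteness
  have hsucc : ((n : ℝ≥0∞) + 1).toReal = n + 1 := by exact_mod_cast ENNReal.toReal_natCast (n + 1)
  rw [areaMoment_succ_eq_lintegral_mul_lintegral,
    lintegral_sampleLIntegral_area_insert_horizontal_pow,
    lintegral_one_sub_pow_betaMeasure_one_one, ENNReal.toReal_mul, ENNReal.toReal_mul, hsucc,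
    ENNReal.toReal_ofReal (by positivity),
    ENNReal.toReal_sum fun a _ ↦ ENNReal.sum_ne_top.2 fun b _ ↦ hfinite a b]
  simp only [ENNReal.toReal_sum fun b _ ↦ hfinite _ b, ENNReal.toReal_mul, ENNReal.toReal_natCast,
    ENNReal.toReal_ofReal (betaOneTwoMoment_nonneg _ _), Nat.cast_add]

lemma choose_mul_betaOneTwoMoment (a₁ a₂ b₁ b₂ : ℕ) :
    ((a₁ + a₂ + 1 + (b₁ + b₂)) * (a₁ + a₂ + 1 + (b₁ + b₂) + 1) / 2 : ℝ) *
      ((a₁ + a₂ + 1 + (b₁ + b₂)).choose (b₁ + b₂) * ((a₁ + a₂ + 1) *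
        ((a₁ + a₂).choose a₁ * (b₁ + b₂).choose b₁ * betaOneTwoMoment (a₁ + b₁) (a₂ + b₂) *
          (1 / (a₁ + a₂ + (b₁ + b₂) + 1))))) =
      (a₁ + b₁).choose b₁ * ((a₂ + b₂ + 1) * (a₂ + b₂).choose b₂) := by
  have hchoose (a b : ℕ) : ((a + b).choose b : ℝ) = (a + b)! / (a ! * b !) := by
    rw [← Nat.choose_symm_add, Nat.cast_add_choose]
  have hsum : a₁ + b₁ + (a₂ + b₂) + 2 = a₁ + a₂ + 1 + (b₁ + b₂) + 1 := by ring
  rw [betaOneTwoMoment, hchoose, hchoose a₂ b₂, hchoose a₁ b₁, Nat.cast_add_choose,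
    Nat.cast_add_choose, hsum, Nat.factorial_succ (a₁ + a₂ + 1 + (b₁ + b₂)),
    Nat.factorial_succ (a₂ + b₂), Nat.factorial_succ (a₁ + a₂)]
  push_cast
  have hne : (a₁ : ℝ) + a₂ + (b₁ + b₂) + 1 ≠ 0 := by positivity
  field_simp
  ring

lemma mul_q_succ_eq_sum (n k : ℕ) :
    ((n + 1 : ℕ) + k : ℝ) * ((n + 1 : ℕ) + k + 1) / 2 * q (n + 1) k =
      ∑ a ∈ antidiagonal n, ∑ b ∈ antidiagonal k,
        q a.1 b.1 * ((a.2 + b.2 + 1) * (a.2 + b.2).choose b.2) := by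
  simp only [q_eq_choose_mul_areaMoment, toReal_areaMoment_succ, Finset.sum_mul, Finset.mul_sum]
  refine Finset.sum_congr rfl fun a ha ↦ Finset.sum_congr rfl fun b hb ↦ ?_
  obtain ⟨a₁, a₂⟩ := a
  obtain ⟨b₁, b₂⟩ := b
  obtain rfl := Finset.HasAntidiagonal.mem_antidiagonal.1 ha
  obtain rfl := Finset.HasAntidiagonal.mem_antidiagonal.1 hb
  push_cast
  linear_combination (areaMoment a₁ b₁).toReal * choose_mul_betaOneTwoMoment a₁ a₂ b₁ b₂

end Moments

/-- recurrence for the normalized moments `q_{n,k}`, `n ≥ 1`, `k ≥ 2`. -/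
theorem stmt2 (n k : ℕ) (hn : 1 ≤ n) (hk : 2 ≤ k) :
    q n k = ((n : ℝ) + k + 1) * ((n : ℝ) + k + 2) / 2 * q (n + 1) k
      - ((n : ℝ) + k) * ((n : ℝ) + k + 1) * (q n k + q (n + 1) (k - 1))
      + ((n : ℝ) + k - 1) * ((n : ℝ) + k) / 2
          * (q (n - 1) k + 2 * q n (k - 1) + q (n + 1) (k - 2)) := by
  obtain ⟨n, rfl⟩ := Nat.exists_eq_add_of_le' hn
  obtain ⟨k, rfl⟩ := Nat.exists_eq_add_of_le' hk
  have hzero (j : ℕ) : ((0 : ℕ) + j : ℝ) * ((0 : ℕ) + j + 1) / 2 * q 0 j = 0 := by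
    rcases eq_or_ne j 0 with rfl | hj
    · simp
    · rw [q_zero_left hj, mul_zero]
  have hrec := recurrence_of_convolution
    (v := fun m j ↦ ((m : ℝ) + j) * (m + j + 1) / 2 * q m j) hzero mul_q_succ_eq_sum n k
  rw [Nat.add_sub_cancel, show k + 2 - 1 = k + 1 by rfl, Nat.add_sub_cancel]
  push_cast at hrec ⊢
  linear_combination -hrec

end
end
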